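/- arXiv:1110.0868 — 2 statements merged into one kernel-verified Lean document; each statement's English description precedes it below -/
import Mathlib

section
/- Let n ≥ 3 be an odd integer and let y: ℤ → ℝ satisfy: y(i+2n) = y(i) for all i ∈ ℤ; y(i) = −1 for all i ∈ [2, 2n−2]_2; y(1)·y(2)⋯y(2n) = 1; y(0) ≠ −1; and y(i) ≠ 0 for all i ∈ ℤ. Then for all integers j and k with j+k odd and k ∈ {n, n+1}, the evaluation of F_{j,k} at y is nonzero. -/
/-!
In suitable coordinates `Q_k` consists of the triples `(u, v, m)` with `u, v ∈ [1, k - 1]` and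
`max(0, u + v - k) < m ≤ min(u, v)`, and every covering relation of `P_k` joins `Q_k` to `Q_{k+1}`.
Fix the part `J` in `Q_k` of an order ideal. The parts in `Q_{k+1}` completing `J` are the sets
between a forced set and an allowed set, so the sum over them is a product. The `J` with at least
one completion are the sets `{m > c(u, v)}` for the corner-sum functions `c` of `k × k` alternating
sign matrices, and the free elements of `Q_{k+1}` are the `1`-entries of the matrix; the one at
`(a, b)` contributes `1 + y(2(2a + b - C))`, where `2C = 3(k + 1) - j`. Under the hypotheses this
factor is `0` unless `2a + b ≡ C (mod n)`, in which case it is `1 + y(0) ≠ 0`. Hence only the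
matrices all of whose `1`-entries lie in this residue class survive.

For `k = n` the class meets each row and column once, so exactly one permutation matrix survives,
and `F_{j,n}` evaluates to a single nonzero term. For `k = n + 1` a row whose admissible column
is `1` also admits column `n + 1`, and the surviving matrices are described by the row `a₀` to
which the entries `-1` in the admissible column of row `1` and `1` in column `n + 1` are added. If
`(1, 1)` is not admissible, `a₀` is unique. If it is, `a₀ ∈ {1, n + 1}`; the two corner-sum
functions differ by `1` at every interior vertex, and periodicity together with `y(1)⋯y(2n) = 1`
shows that the two terms have ratio `y(0)`, so their sum is a nonzero term times `1 + y(0) ≠ 0`.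
-/

open MvPolynomial
open scoped Classical

noncomputable section

/-- The set `Q_k`: triples `(r,s,t)` with `|r|+|s| ≤ k-2`, `r+s ≡ k (mod 2)`,
`t ≡ 2|s|-k+2 (mod 4)` and `2|s|-k+2 ≤ t ≤ k-2-2|r|`. -/
def pentagramQ (k : ℤ) : Set (ℤ × ℤ × ℤ) :=
  {p | |p.1| + |p.2.1| ≤ k - 2 ∧ (2 : ℤ) ∣ (p.1 + p.2.1 - k) ∧
    (4 : ℤ) ∣ (p.2.2 - (2 * |p.2.1| - k + 2)) ∧
    2 * |p.2.1| - k + 2 ≤ p.2.2 ∧ p.2.2 ≤ k - 2 - 2 * |p.1|}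

/-- The set `P_k = Q_k ∪ Q_{k+1}`. -/
def pentagramP (k : ℤ) : Set (ℤ × ℤ × ℤ) := pentagramQ k ∪ pentagramQ (k + 1)

/-- The covering relation: `(r',s',t')` covers `(r,s,t)` iff `t' = t + 1` and
`|r'-r| + |s'-s| = 1`. -/
def pentagramCovers (x y : ℤ × ℤ × ℤ) : Prop :=
  y.2.2 = x.2.2 + 1 ∧ |y.1 - x.1| + |y.2.1 - x.2.1| = 1

/-- The partial order on `P_k`: the reflexive-transitive closure of the covering
relation within `P_k`. -/
def pentagramLe (k : ℤ) : (ℤ × ℤ × ℤ) → (ℤ × ℤ × ℤ) → Prop :=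
  Relation.ReflTransGen
    (fun x y => x ∈ pentagramP k ∧ y ∈ pentagramP k ∧ pentagramCovers x y)

/-- An order ideal of `P_k`: a downward-closed subset of `P_k`. -/
def IsPentagramOrderIdeal (k : ℤ) (I : Set (ℤ × ℤ × ℤ)) : Prop :=
  I ⊆ pentagramP k ∧ ∀ x y, y ∈ I → pentagramLe k x y → x ∈ I

/-- `P_k` realized as a `Finset` (it is contained in the displayed finite box). -/
def pentagramPFinset (k : ℤ) : Finset (ℤ × ℤ × ℤ) :=
  ((Finset.Icc (-(k-1)) (k-1)) ×ˢ (Finset.Icc (-(k-1)) (k-1)) ×ˢ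
    (Finset.Icc (-(k-1)) (k-1))).filter (fun p => p ∈ pentagramP k)

/-- The F-polynomial `F_{j,k} = Σ_{order ideals I of P_k} Π_{(r,s,t) ∈ I} y_{3r+s+j}`,
as an element of `ℤ[y_i : i ∈ ℤ] = MvPolynomial ℤ ℤ`. -/
def pentagramF (j k : ℤ) : MvPolynomial ℤ ℤ :=
  ∑ I ∈ (pentagramPFinset k).powerset.filter
      (fun I : Finset (ℤ × ℤ × ℤ) => IsPentagramOrderIdeal k (↑I : Set (ℤ × ℤ × ℤ))),
    ∏ p ∈ I, X (3 * p.1 + p.2.1 + j)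

/-- The ring endomorphism of `ℤ[y_i : i ∈ ℤ]` sending `y_i ↦ -1` for `i ∈ S`
and fixing the other variables; `substNeg S F` is `F|_S`. -/
def substNeg (S : Set ℤ) : MvPolynomial ℤ ℤ →+* MvPolynomial ℤ ℤ :=
  (MvPolynomial.aeval
    (fun i : ℤ => if i ∈ S then (-1 : MvPolynomial ℤ ℤ) else X i)).toRingHom

/-- The arithmetic progression `[a,b]_d = {a, a+d, a+2d, …, b}` (as a subset of `ℤ`). -/
def AP (a b d : ℤ) : Set ℤ := {x | a ≤ x ∧ x ≤ b ∧ d ∣ (x - a)}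

/-! ### Ideals of a two-level relation -/

section TwoLevel

variable {α R : Type*} [DecidableEq α] [CommSemiring R] {r : α → α → Prop} {A B J T : Finset α}

/-- `I` is a down-set, relative to the ground set `P`, for the relation `r`, where `r x y` says that
`x` is below `y`. -/
def IsDownClosed (r : α → α → Prop) (P I : Finset α) : Prop :=
  ∀ x ∈ P, ∀ y ∈ I, r x y → x ∈ I

/-- The elements of `B` that lie in every down-set of `A ∪ B` whose part in `A` is `J`. -/
def forcedPart (r : α → α → Prop) (B J : Finset α) : Finset α :=
  {p ∈ B | ∃ x ∈ J, r p x}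

/-- The elements of `B` that may lie in a down-set of `A ∪ B` whose part in `A` is `J`. -/
def allowedPart (r : α → α → Prop) (A B J : Finset α) : Finset α :=
  {p ∈ B | ∀ x ∈ A, r x p → x ∈ J}

lemma isDownClosed_union_iff (hAB : Disjoint A B) (hA : ∀ x ∈ A, ∀ y ∈ A, ¬ r x y)
    (hB : ∀ x ∈ B, ∀ y ∈ B, ¬ r x y) (hJ : J ⊆ A) (hT : T ⊆ B) :
    IsDownClosed r (A ∪ B) (J ∪ T) ↔ forcedPart r B J ⊆ T ∧ T ⊆ allowedPart r A B J := by
  have hdisj : ∀ x ∈ A, x ∉ B := fun _ hx => Finset.disjoint_left.1 hAB hx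
  simp only [IsDownClosed, forcedPart, allowedPart, Finset.subset_iff, Finset.mem_filter,
    Finset.mem_union] at hJ hT ⊢
  constructor
  · intro h
    refine ⟨fun p ⟨hp, x, hx, hpx⟩ => ?_, fun p hp => ⟨hT hp, fun x hx hxp => ?_⟩⟩
    · exact (h p (Or.inr hp) x (Or.inl hx) hpx).resolve_left fun hpJ => hdisj p (hJ hpJ) hp
    · exact (h x (Or.inl hx) p (Or.inr hp) hxp).resolve_right fun hxT => hdisj x hx (hT hxT)
  · rintro ⟨hforced, hallowed⟩ x (hx | hx) y (hy | hy) hxy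
    · exact absurd hxy (hA x hx y (hJ hy))
    · exact Or.inl ((hallowed hy).2 x hx hxy)
    · exact Or.inr (hforced ⟨hx, y, hy, hxy⟩)
    · exact absurd hxy (hB x hx y (hT hy))

lemma sum_isDownClosed_eq_sum_powerset (hAB : Disjoint A B) (hA : ∀ x ∈ A, ∀ y ∈ A, ¬ r x y)
    (hB : ∀ x ∈ B, ∀ y ∈ B, ¬ r x y) (w : α → R) :
    ∑ I ∈ (A ∪ B).powerset with IsDownClosed r (A ∪ B) I, ∏ p ∈ I, w p =
      ∑ J ∈ A.powerset, (∏ p ∈ J, w p) *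
        ∑ T ∈ Finset.Icc (forcedPart r B J) (allowedPart r A B J), ∏ p ∈ T, w p := by
  have hallowed : ∀ {J T}, T ⊆ allowedPart r A B J → T ⊆ B :=
    fun h => h.trans (Finset.filter_subset _ _)
  have hsplit : ∀ {I}, I ⊆ A ∪ B → I ∩ A ∪ I ∩ B = I := fun h => by
    rw [← Finset.inter_union_distrib_left, Finset.inter_eq_left.2 h]
  simp only [Finset.mul_sum]
  rw [Finset.sum_sigma']
  refine Finset.sum_bij' (fun I _ => ⟨I ∩ A, I ∩ B⟩) (fun q _ => q.1 ∪ q.2) ?_ ?_ ?_ ?_ ?_ <;>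
    simp only [Finset.mem_filter, Finset.mem_sigma, Finset.mem_powerset, Finset.mem_Icc]
  · rintro I ⟨hI, hdown⟩
    rw [← hsplit hI, isDownClosed_union_iff hAB hA hB Finset.inter_subset_right
      Finset.inter_subset_right] at hdown
    exact ⟨Finset.inter_subset_right, hdown⟩
  · rintro ⟨J, T⟩ ⟨hJ, hT⟩
    exact ⟨Finset.union_subset_union hJ (hallowed hT.2),
      (isDownClosed_union_iff hAB hA hB hJ (hallowed hT.2)).2 hT⟩
  · exact fun I hI => hsplit hI.1
  · rintro ⟨J, T⟩ ⟨hJ, hT⟩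
    have hTA := hAB.symm.mono_left (hallowed hT.2)
    have hJB := hAB.mono_left hJ
    simp only [Finset.union_inter_distrib_right, Finset.inter_eq_left.2 hJ,
      Finset.inter_eq_left.2 (hallowed hT.2), Finset.disjoint_iff_inter_eq_empty.1 hTA,
      Finset.disjoint_iff_inter_eq_empty.1 hJB, Finset.union_empty, Finset.empty_union]
  · intro I hI
    rw [← Finset.prod_union (hAB.mono Finset.inter_subset_right Finset.inter_subset_right),
      hsplit hI.1]

lemma sum_Icc_prod_eq_prod_mul_prod_sdiff (h : J ⊆ T) (w : α → R) :
    ∑ U ∈ Finset.Icc J T, ∏ p ∈ U, w p = (∏ p ∈ J, w p) * ∏ p ∈ T \ J, (1 + w p) := by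
  have hdisj : ∀ U ∈ (T \ J).powerset, Disjoint J U := fun U hU =>
    Finset.disjoint_sdiff.mono_right (Finset.mem_powerset.1 hU)
  rw [Finset.Icc_eq_image_powerset h, Finset.prod_one_add, Finset.mul_sum, Finset.sum_image]
  · exact Finset.sum_congr rfl fun U hU => Finset.prod_union (hdisj U hU)
  · intro U hU V hV (hUV : J ∪ U = J ∪ V)
    rw [← Finset.union_sdiff_cancel_left (hdisj U hU), hUV,
      Finset.union_sdiff_cancel_left (hdisj V hV)]

end TwoLevel

/-! ### Coordinates on `P_k` -/

/-- The element `(r, s, t)` of `Q_k` at level `m` above the vertex `(u, v)` of a square grid. In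
these coordinates every element of `Q_k` lies above a vertex `(u, v)` with `1 ≤ u, v ≤ k - 1`. -/
def gridPoint (k u v m : ℤ) : ℤ × ℤ × ℤ :=
  (u + v - k, u - v, 2 * (u + v) - k + 2 - 4 * m)

lemma gridPoint_inj {k u v m u' v' m' : ℤ} :
    gridPoint k u v m = gridPoint k u' v' m' ↔ u = u' ∧ v = v' ∧ m = m' := by
  simp only [gridPoint, Prod.mk.injEq]
  omega

lemma gridPoint_mem_pentagramQ {k u v m : ℤ} :
    gridPoint k u v m ∈ pentagramQ k ↔ 0 < m ∧ u + v - k < m ∧ m ≤ u ∧ m ≤ v := by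
  simp only [gridPoint, pentagramQ, Set.mem_ofPred_eq]
  rcases abs_cases (u + v - k) with ⟨h1, _⟩ | ⟨h1, _⟩ <;>
  rcases abs_cases (u - v) with ⟨h2, _⟩ | ⟨h2, _⟩ <;> rw [h1, h2] <;> omega

lemma exists_gridPoint_eq {k : ℤ} {p : ℤ × ℤ × ℤ} (hp : p ∈ pentagramQ k) :
    ∃ u v m, gridPoint k u v m = p := by
  obtain ⟨r, s, t⟩ := p
  obtain ⟨-, ⟨a, ha : r + s - k = 2 * a⟩, ⟨b, hb : t - (2 * |s| - k + 2) = 4 * b⟩, -, -⟩ := hp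
  refine ⟨a + k, a + k - s, (2 * (2 * a + 2 * k - s) - k + 2 - t) / 4, ?_⟩
  simp only [gridPoint, Prod.mk.injEq]
  rcases abs_cases s with ⟨hs, _⟩ | ⟨hs, _⟩ <;> rw [hs] at hb <;> omega

section Covers

variable {k u v m a b l : ℤ}

lemma pentagramCovers_gridPoint_succ :
    pentagramCovers (gridPoint k u v m) (gridPoint (k + 1) a b l) ↔
      l = m ∧ (a = u ∧ b = v + 1 ∨ a = u + 1 ∧ b = v) := by
  simp only [pentagramCovers, gridPoint]
  rcases abs_cases (a + b - (k + 1) - (u + v - k)) with ⟨h1, _⟩ | ⟨h1, _⟩ <;>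
  rcases abs_cases (a - b - (u - v)) with ⟨h2, _⟩ | ⟨h2, _⟩ <;> rw [h1, h2] <;> omega

lemma pentagramCovers_succ_gridPoint :
    pentagramCovers (gridPoint (k + 1) a b l) (gridPoint k u v m) ↔
      a = u ∧ b = v ∧ l = m ∨ a = u + 1 ∧ b = v + 1 ∧ l = m + 1 := by
  simp only [pentagramCovers, gridPoint]
  rcases abs_cases (u + v - k - (a + b - (k + 1))) with ⟨h1, _⟩ | ⟨h1, _⟩ <;>
  rcases abs_cases (u - v - (a - b)) with ⟨h2, _⟩ | ⟨h2, _⟩ <;> rw [h1, h2] <;> omega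

lemma not_pentagramCovers_of_mem {x y : ℤ × ℤ × ℤ} (hx : x ∈ pentagramQ k)
    (hy : y ∈ pentagramQ k) : ¬ pentagramCovers x y := by
  -- `r + s` has the same parity at all points of `Q_k`
  obtain ⟨u, v, m, rfl⟩ := exists_gridPoint_eq hx
  obtain ⟨a, b, l, rfl⟩ := exists_gridPoint_eq hy
  simp only [pentagramCovers, gridPoint]
  omega

end Covers

/-- The `N × N` square of positions `(a, b)` with `1 ≤ a, b ≤ N`. -/
def gridSquare (N : ℤ) : Finset (ℤ × ℤ) := Finset.Icc 1 N ×ˢ Finset.Icc 1 N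

lemma mem_gridSquare {N : ℤ} {x : ℤ × ℤ} :
    x ∈ gridSquare N ↔ (1 ≤ x.1 ∧ x.1 ≤ N) ∧ 1 ≤ x.2 ∧ x.2 ≤ N := by
  simp only [gridSquare, Finset.mem_product, Finset.mem_Icc]

/-- The points of the grid of size `k - 1` whose level lies in the half-open interval `(f, g]`. -/
def levelBand (k : ℤ) (f g : ℤ → ℤ → ℤ) : Finset (ℤ × ℤ × ℤ) :=
  (gridSquare (k - 1)).biUnion fun x =>
    (Finset.Ioc (f x.1 x.2) (g x.1 x.2)).image (gridPoint k x.1 x.2)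

lemma gridPoint_mem_levelBand {k : ℤ} {f g : ℤ → ℤ → ℤ} {u v m : ℤ} :
    gridPoint k u v m ∈ levelBand k f g ↔
      ((1 ≤ u ∧ u ≤ k - 1) ∧ 1 ≤ v ∧ v ≤ k - 1) ∧ f u v < m ∧ m ≤ g u v := by
  simp only [levelBand, Finset.mem_biUnion, Finset.mem_image, gridPoint_inj, Prod.exists,
    mem_gridSquare, Finset.mem_Ioc]
  constructor
  · rintro ⟨_, _, h, _, hm, rfl, rfl, rfl⟩
    exact ⟨h, hm⟩
  · exact fun ⟨h, hm⟩ => ⟨u, v, h, m, hm, rfl, rfl, rfl⟩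

lemma exists_gridPoint_eq_of_mem_levelBand {k : ℤ} {f g : ℤ → ℤ → ℤ} {p : ℤ × ℤ × ℤ}
    (hp : p ∈ levelBand k f g) : ∃ u v m, gridPoint k u v m = p := by
  obtain ⟨x, -, hx⟩ := Finset.mem_biUnion.1 hp
  obtain ⟨m, -, hm⟩ := Finset.mem_image.1 hx
  exact ⟨x.1, x.2, m, hm⟩

lemma prod_levelBand {R : Type*} [CommMonoid R] {k : ℤ} {w : ℤ × ℤ × ℤ → R} {W : ℤ → ℤ → R}
    (hw : ∀ u v m, w (gridPoint k u v m) = W u v) (f g : ℤ → ℤ → ℤ) :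
    ∏ p ∈ levelBand k f g, w p =
      ∏ x ∈ gridSquare (k - 1), W x.1 x.2 ^ (g x.1 x.2 - f x.1 x.2).toNat := by
  rw [levelBand, Finset.prod_biUnion]
  · refine Finset.prod_congr rfl fun x _ => ?_
    rw [Finset.prod_image fun _ _ _ _ h => (gridPoint_inj.1 h).2.2,
      Finset.prod_congr rfl fun m _ => hw x.1 x.2 m, Finset.prod_const, Int.card_Ioc]
  · intro x _ y _ hxy
    refine Finset.disjoint_left.2 fun p hpx hpy => hxy ?_
    obtain ⟨m, -, rfl⟩ := Finset.mem_image.1 hpx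
    obtain ⟨l, -, hl⟩ := Finset.mem_image.1 hpy
    have := gridPoint_inj.1 hl
    exact Prod.ext this.1.symm this.2.1.symm

/-- `Q_k` realized as a `Finset`. -/
def pentagramQFinset (k : ℤ) : Finset (ℤ × ℤ × ℤ) :=
  levelBand k (fun u v => max 0 (u + v - k)) fun u v => min u v

lemma mem_pentagramQFinset {k : ℤ} {p : ℤ × ℤ × ℤ} :
    p ∈ pentagramQFinset k ↔ p ∈ pentagramQ k := by
  suffices h : ∀ u v m, gridPoint k u v m ∈ pentagramQFinset k ↔
      gridPoint k u v m ∈ pentagramQ k by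
    constructor <;> intro hp
    · obtain ⟨u, v, m, rfl⟩ := exists_gridPoint_eq_of_mem_levelBand hp
      exact (h u v m).1 hp
    · obtain ⟨u, v, m, rfl⟩ := exists_gridPoint_eq hp
      exact (h u v m).2 hp
  intro u v m
  rw [pentagramQFinset, gridPoint_mem_levelBand, gridPoint_mem_pentagramQ]
  omega

lemma pentagramPFinset_eq_union (k : ℤ) :
    pentagramPFinset k = pentagramQFinset k ∪ pentagramQFinset (k + 1) := by
  ext ⟨r, s, t⟩
  simp only [pentagramPFinset, pentagramP, Finset.mem_filter, Finset.mem_product, Finset.mem_Icc,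
    Finset.mem_union, mem_pentagramQFinset, Set.mem_union, and_iff_right_iff_imp]
  simp only [pentagramQ, Set.mem_ofPred_eq]
  have := neg_le_abs r
  have := le_abs_self r
  have := neg_le_abs s
  have := le_abs_self s
  omega

lemma disjoint_pentagramQFinset_succ (k : ℤ) :
    Disjoint (pentagramQFinset k) (pentagramQFinset (k + 1)) := by
  refine Finset.disjoint_left.2 fun p hp hp' => ?_
  obtain ⟨u, v, m, rfl⟩ := exists_gridPoint_eq_of_mem_levelBand hp
  obtain ⟨a, b, l, h⟩ := exists_gridPoint_eq_of_mem_levelBand hp'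
  simp only [gridPoint, Prod.mk.injEq] at h
  omega

lemma isPentagramOrderIdeal_iff {k : ℤ} {I : Finset (ℤ × ℤ × ℤ)}
    (hI : I ⊆ pentagramPFinset k) :
    IsPentagramOrderIdeal k (I : Set (ℤ × ℤ × ℤ)) ↔
      IsDownClosed pentagramCovers (pentagramPFinset k) I := by
  have hmem : ∀ {p}, p ∈ pentagramPFinset k ↔ p ∈ pentagramP k := fun {p} => by
    rw [pentagramPFinset_eq_union, Finset.mem_union, mem_pentagramQFinset, mem_pentagramQFinset]
    rfl
  constructor
  · exact fun h x hx y hy hxy =>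
      h.2 x y hy (Relation.ReflTransGen.single ⟨hmem.1 hx, hmem.1 (hI hy), hxy⟩)
  · refine fun h => ⟨fun p hp => hmem.1 (hI hp), fun x y hy hxy => ?_⟩
    induction hxy using Relation.ReflTransGen.head_induction_on with
    | refl => exact hy
    | head hstep _ ih => exact h _ (hmem.2 hstep.1) _ ih hstep.2.2

/-- The value at `y` of the variable `y_{3r+s+j}` attached to the elements `(r, s, t)` of `Q_k`
above the vertex `(u, v)`. -/
def latticeWeight {R : Type*} (y : ℤ → R) (j k u v : ℤ) : R := y (4 * u + 2 * v - 3 * k + j)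

lemma apply_gridPoint_eq_latticeWeight {R : Type*} (y : ℤ → R) (j k u v m : ℤ) :
    y (3 * (gridPoint k u v m).1 + (gridPoint k u v m).2.1 + j) = latticeWeight y j k u v := by
  rw [latticeWeight, gridPoint]
  congr 1
  ring

lemma aeval_pentagramF_eq_sum_powerset {R : Type*} [CommRing R] (y : ℤ → R) (j k : ℤ) :
    aeval y (pentagramF j k) =
      ∑ J ∈ (pentagramQFinset k).powerset, (∏ p ∈ J, y (3 * p.1 + p.2.1 + j)) *
        ∑ T ∈ Finset.Icc (forcedPart pentagramCovers (pentagramQFinset (k + 1)) J)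
          (allowedPart pentagramCovers (pentagramQFinset k) (pentagramQFinset (k + 1)) J),
          ∏ p ∈ T, y (3 * p.1 + p.2.1 + j) := by
  have hQ : ∀ K, ∀ x ∈ pentagramQFinset K, ∀ y ∈ pentagramQFinset K, ¬ pentagramCovers x y :=
    fun K x hx y hy => not_pentagramCovers_of_mem (mem_pentagramQFinset.1 hx)
      (mem_pentagramQFinset.1 hy)
  rw [← sum_isDownClosed_eq_sum_powerset (disjoint_pentagramQFinset_succ k) (hQ k) (hQ (k + 1)),
    ← pentagramPFinset_eq_union, pentagramF,
    Finset.filter_congr fun I hI => isPentagramOrderIdeal_iff (Finset.mem_powerset.1 hI)]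
  simp only [map_sum, map_prod, aeval_X]

/-! ### Corner-sum functions -/

/-- `c u v` is the sum of the entries at the positions `(a, b)` with `a ≤ u` and `b ≤ v` of a
`k × k` alternating sign matrix. Only the values of `c` on `[0, k]²` are constrained. -/
structure IsCornerSum (k : ℤ) (c : ℤ → ℤ → ℤ) : Prop where
  zero_left : ∀ v (_ : 0 ≤ v := by omega) (_ : v ≤ k := by omega), c 0 v = 0
  zero_right : ∀ u (_ : 0 ≤ u := by omega) (_ : u ≤ k := by omega), c u 0 = 0
  last_left : ∀ v (_ : 0 ≤ v := by omega) (_ : v ≤ k := by omega), c k v = v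
  last_right : ∀ u (_ : 0 ≤ u := by omega) (_ : u ≤ k := by omega), c u k = u
  row_step : ∀ u v (_ : 1 ≤ u := by omega) (_ : u ≤ k := by omega) (_ : 0 ≤ v := by omega)
    (_ : v ≤ k := by omega), c (u - 1) v ≤ c u v ∧ c u v ≤ c (u - 1) v + 1
  col_step : ∀ u v (_ : 0 ≤ u := by omega) (_ : u ≤ k := by omega) (_ : 1 ≤ v := by omega)
    (_ : v ≤ k := by omega), c u (v - 1) ≤ c u v ∧ c u v ≤ c u (v - 1) + 1

lemma le_and_le_add_sub_of_step {f : ℤ → ℤ} {x y z : ℤ}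
    (hf : ∀ i, x < i → i ≤ z → f (i - 1) ≤ f i ∧ f i ≤ f (i - 1) + 1) (hxy : x ≤ y)
    (hyz : y ≤ z) : f x ≤ f y ∧ f y ≤ f x + (y - x) := by
  induction y, hxy using Int.leInduction with
  | base => omega
  | succ y hxy ih =>
    have := hf (y + 1) (by omega) hyz
    rw [add_sub_cancel_right] at this
    have := ih (by omega)
    omega

lemma IsCornerSum.bounds {k : ℤ} {c : ℤ → ℤ → ℤ} (hc : IsCornerSum k c) (u v : ℤ)
    (hu : 0 ≤ u := by omega) (huk : u ≤ k := by omega) (hv : 0 ≤ v := by omega)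
    (hvk : v ≤ k := by omega) : 0 ≤ c u v ∧ u + v - k ≤ c u v ∧ c u v ≤ u ∧ c u v ≤ v := by
  have hstep : ∀ i, 0 < i → i ≤ k → c (i - 1) v ≤ c i v ∧ c i v ≤ c (i - 1) v + 1 :=
    fun i _ _ => hc.row_step i v
  have := hc.zero_left v
  have := hc.last_left v
  have := le_and_le_add_sub_of_step (f := (c · v)) hstep hu huk
  have := le_and_le_add_sub_of_step (f := (c · v)) (fun i _ => hstep i (by omega)) huk le_rfl
  omega

/-- The entry at `(a, b)` of the matrix with corner sums `c`. -/
def entry (c : ℤ → ℤ → ℤ) (a b : ℤ) : ℤ :=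
  c a b - c (a - 1) b - c a (b - 1) + c (a - 1) (b - 1)

/-- The positions of the entries `1` of the `k × k` matrix with corner sums `c`. -/
def onesSet (k : ℤ) (c : ℤ → ℤ → ℤ) : Finset (ℤ × ℤ) := {x ∈ gridSquare k | entry c x.1 x.2 = 1}

/-- The subset of `Q_k` attached to the corner-sum function `c`. -/
def cornerIdeal (k : ℤ) (c : ℤ → ℤ → ℤ) : Finset (ℤ × ℤ × ℤ) :=
  levelBand k c fun u v => min u v

/-- The elements of `Q_{k+1}` above `(a, b)` forced by `cornerIdeal k c` are those whose level
exceeds this number. -/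
def forcedLevel (c : ℤ → ℤ → ℤ) (a b : ℤ) : ℤ := min (c a b) (c (a - 1) (b - 1) + 1)

/-- The elements of `Q_{k+1}` above `(a, b)` allowed by `cornerIdeal k c` are those whose level
exceeds this number. -/
def allowedLevel (c : ℤ → ℤ → ℤ) (a b : ℤ) : ℤ := max (c a (b - 1)) (c (a - 1) b)

lemma eq_levelBand_of_forall_gridPoint {k : ℤ} {S : Finset (ℤ × ℤ × ℤ)} {f g : ℤ → ℤ → ℤ}
    (hS : S ⊆ pentagramQFinset k)
    (h : ∀ u v m, gridPoint k u v m ∈ S ↔ gridPoint k u v m ∈ levelBand k f g) :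
    S = levelBand k f g := by
  ext p
  constructor <;> intro hp
  · obtain ⟨u, v, m, rfl⟩ := exists_gridPoint_eq_of_mem_levelBand (hS hp)
    exact (h u v m).1 hp
  · obtain ⟨u, v, m, rfl⟩ := exists_gridPoint_eq_of_mem_levelBand hp
    exact (h u v m).2 hp

lemma levelBand_sdiff_levelBand {k : ℤ} {f g h : ℤ → ℤ → ℤ}
    (hgh : ∀ x ∈ gridSquare (k - 1), g x.1 x.2 ≤ h x.1 x.2) :
    levelBand k f h \ levelBand k g h = levelBand k f g := by
  ext p
  rw [Finset.mem_sdiff]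
  constructor
  · rintro ⟨hp, hp'⟩
    obtain ⟨u, v, m, rfl⟩ := exists_gridPoint_eq_of_mem_levelBand hp
    rw [gridPoint_mem_levelBand] at hp hp' ⊢
    omega
  · intro hp
    obtain ⟨u, v, m, rfl⟩ := exists_gridPoint_eq_of_mem_levelBand hp
    simp only [gridPoint_mem_levelBand] at hp ⊢
    have := hgh (u, v) (mem_gridSquare.2 hp.1)
    dsimp only at this
    omega

lemma levelBand_congr {k : ℤ} {f f' : ℤ → ℤ → ℤ} (g : ℤ → ℤ → ℤ)
    (h : ∀ x ∈ gridSquare (k - 1), f x.1 x.2 = f' x.1 x.2) :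
    levelBand k f g = levelBand k f' g :=
  Finset.biUnion_congr rfl fun x hx => by rw [h x hx]

namespace IsCornerSum

variable {k : ℤ} {c : ℤ → ℤ → ℤ}

lemma forcedPart_cornerIdeal (hc : IsCornerSum k c) :
    forcedPart pentagramCovers (pentagramQFinset (k + 1)) (cornerIdeal k c) =
      levelBand (k + 1) (forcedLevel c) fun a b => min a b := by
  refine eq_levelBand_of_forall_gridPoint (Finset.filter_subset _ _) fun a b l => ?_
  rw [forcedPart, Finset.mem_filter, mem_pentagramQFinset, gridPoint_mem_pentagramQ,
    gridPoint_mem_levelBand, forcedLevel]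
  constructor
  · rintro ⟨hl, x, hx, hpx⟩
    obtain ⟨u, v, m, rfl⟩ := exists_gridPoint_eq_of_mem_levelBand hx
    rw [cornerIdeal, gridPoint_mem_levelBand] at hx
    obtain ⟨rfl, rfl, rfl⟩ | ⟨rfl, rfl, rfl⟩ := pentagramCovers_succ_gridPoint.1 hpx
    · omega
    · simp only [add_sub_cancel_right]
      omega
  · rintro ⟨hab, hl, hl'⟩
    have := hc.bounds a b
    have := hc.bounds (a - 1) (b - 1)
    refine ⟨by omega, ?_⟩
    rcases min_lt_iff.1 hl with h | h
    · have : a ≠ k := by rintro rfl; have := hc.last_left b; omega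
      have : b ≠ k := by rintro rfl; have := hc.last_right a; omega
      refine ⟨gridPoint k a b l, ?_, pentagramCovers_succ_gridPoint.2 (by omega)⟩
      rw [cornerIdeal, gridPoint_mem_levelBand]
      omega
    · refine ⟨gridPoint k (a - 1) (b - 1) (l - 1), ?_,
        pentagramCovers_succ_gridPoint.2 (by omega)⟩
      rw [cornerIdeal, gridPoint_mem_levelBand]
      omega

lemma allowedPart_cornerIdeal (hc : IsCornerSum k c) :
    allowedPart pentagramCovers (pentagramQFinset k) (pentagramQFinset (k + 1))
      (cornerIdeal k c) = levelBand (k + 1) (allowedLevel c) fun a b => min a b := by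
  refine eq_levelBand_of_forall_gridPoint (Finset.filter_subset _ _) fun a b l => ?_
  rw [allowedPart, Finset.mem_filter, mem_pentagramQFinset, gridPoint_mem_pentagramQ,
    gridPoint_mem_levelBand, allowedLevel]
  have hmem : ∀ {u v m}, gridPoint k u v m ∈ cornerIdeal k c ↔ _ := gridPoint_mem_levelBand
  constructor
  · rintro ⟨hl, h⟩
    have := hc.bounds a (b - 1)
    have := hc.bounds (a - 1) b
    have hleft : l ≤ b - 1 → c a (b - 1) < l := fun _ => (hmem.1 <|
      h (gridPoint k a (b - 1) l)
        (mem_pentagramQFinset.2 <| gridPoint_mem_pentagramQ.2 (by omega))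
        (pentagramCovers_gridPoint_succ.2 (by omega))).2.1
    have hright : l ≤ a - 1 → c (a - 1) b < l := fun _ => (hmem.1 <|
      h (gridPoint k (a - 1) b l)
        (mem_pentagramQFinset.2 <| gridPoint_mem_pentagramQ.2 (by omega))
        (pentagramCovers_gridPoint_succ.2 (by omega))).2.1
    omega
  · rintro ⟨hab, hl, hl'⟩
    have := hc.bounds a (b - 1)
    have := hc.bounds (a - 1) b
    refine ⟨by omega, fun x hx hxp => ?_⟩
    obtain ⟨u, v, m, rfl⟩ := exists_gridPoint_eq_of_mem_levelBand hx
    rw [mem_pentagramQFinset, gridPoint_mem_pentagramQ] at hx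
    rw [max_lt_iff] at hl
    obtain ⟨rfl, ⟨rfl, rfl⟩ | ⟨rfl, rfl⟩⟩ := pentagramCovers_gridPoint_succ.1 hxp <;>
    simp only [add_sub_cancel_right] at hl <;> exact hmem.2 (by omega)

lemma forcedLevel_le_min (hc : IsCornerSum k c) {x : ℤ × ℤ} (hx : x ∈ gridSquare k) :
    forcedLevel c x.1 x.2 ≤ min x.1 x.2 := by
  rw [mem_gridSquare] at hx
  have := hc.bounds x.1 x.2
  rw [forcedLevel]
  omega

lemma forcedLevel_sub_allowedLevel (hc : IsCornerSum k c) {x : ℤ × ℤ} (hx : x ∈ gridSquare k) :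
    forcedLevel c x.1 x.2 - allowedLevel c x.1 x.2 = if entry c x.1 x.2 = 1 then 1 else 0 := by
  rw [mem_gridSquare] at hx
  have := hc.row_step x.1 x.2
  have := hc.row_step x.1 (x.2 - 1)
  have := hc.col_step x.1 x.2
  have := hc.col_step (x.1 - 1) x.2
  rw [forcedLevel, allowedLevel, entry]
  split_ifs <;> omega

end IsCornerSum

/-- The total weight of the order ideals of `P_k` whose part in `Q_k` is `cornerIdeal k c`, when
the elements above `(u, v)` have weight `X u v` in `Q_k` and `Z u v` in `Q_{k+1}`. -/
def cornerWeight {R : Type*} [CommSemiring R] (k : ℤ) (X Z : ℤ → ℤ → R) (c : ℤ → ℤ → ℤ) : R :=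
  (∏ x ∈ gridSquare (k - 1), X x.1 x.2 ^ (min x.1 x.2 - c x.1 x.2).toNat) *
    (∏ x ∈ gridSquare k, Z x.1 x.2 ^ (min x.1 x.2 - forcedLevel c x.1 x.2).toNat) *
    ∏ x ∈ onesSet k c, (1 + Z x.1 x.2)

lemma IsCornerSum.prod_mul_sum_eq_cornerWeight {R : Type*} [CommSemiring R] {k : ℤ}
    {c : ℤ → ℤ → ℤ} (hc : IsCornerSum k c) {w : ℤ × ℤ × ℤ → R} {X Z : ℤ → ℤ → R}
    (hX : ∀ u v m, w (gridPoint k u v m) = X u v)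
    (hZ : ∀ u v m, w (gridPoint (k + 1) u v m) = Z u v) :
    (∏ p ∈ cornerIdeal k c, w p) *
      (∑ T ∈ Finset.Icc (forcedPart pentagramCovers (pentagramQFinset (k + 1)) (cornerIdeal k c))
        (allowedPart pentagramCovers (pentagramQFinset k) (pentagramQFinset (k + 1))
          (cornerIdeal k c)), ∏ p ∈ T, w p) = cornerWeight k X Z c := by
  have hfree := levelBand_sdiff_levelBand (k := k + 1) (f := allowedLevel c) (g := forcedLevel c)
    (h := fun a b => min a b) fun x hx => hc.forcedLevel_le_min (add_sub_cancel_right k 1 ▸ hx)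
  have hsub : levelBand (k + 1) (forcedLevel c) (fun a b => min a b) ⊆
      levelBand (k + 1) (allowedLevel c) fun a b => min a b := by
    intro p hp
    obtain ⟨a, b, l, rfl⟩ := exists_gridPoint_eq_of_mem_levelBand hp
    rw [gridPoint_mem_levelBand, add_sub_cancel_right] at hp ⊢
    have := hc.forcedLevel_sub_allowedLevel (x := (a, b)) (mem_gridSquare.2 hp.1)
    dsimp only at this
    split_ifs at this <;> omega
  have hones : ∏ p ∈ levelBand (k + 1) (allowedLevel c) (forcedLevel c), (1 + w p) =
      ∏ x ∈ onesSet k c, (1 + Z x.1 x.2) := by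
    rw [prod_levelBand (fun u v m => congrArg (1 + ·) (hZ u v m)), add_sub_cancel_right, onesSet,
      Finset.prod_filter]
    refine Finset.prod_congr rfl fun x hx => ?_
    rw [hc.forcedLevel_sub_allowedLevel hx]
    split_ifs <;> simp
  rw [hc.forcedPart_cornerIdeal, hc.allowedPart_cornerIdeal,
    sum_Icc_prod_eq_prod_mul_prod_sdiff hsub, hfree, hones, cornerIdeal, prod_levelBand hX,
    prod_levelBand hZ, add_sub_cancel_right, ← mul_assoc, cornerWeight]

/-- `P u v m` is membership of the point at level `m` above `(u, v)` in a subset of `Q_k` that is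
the part in `Q_k` of an order ideal of `P_k`. The closure properties say that every element of
`Q_k` below an element of `Q_{k+1}` below an element of the subset lies in the subset. -/
structure IsGridIdeal (k : ℤ) (P : ℤ → ℤ → ℤ → Prop) : Prop where
  bounds : ∀ {u v m}, P u v m → 0 < m ∧ u + v - k < m ∧ m ≤ u ∧ m ≤ v
  pred_left : ∀ {u v m}, P u v m → m ≤ u - 1 → P (u - 1) v m
  pred_right : ∀ {u v m}, P u v m → m ≤ v - 1 → P u (v - 1) m
  succ_left : ∀ {u v m}, P u v m → m + 1 ≤ v → P (u + 1) v (m + 1)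
  succ_right : ∀ {u v m}, P u v m → m + 1 ≤ u → P u (v + 1) (m + 1)

/-- `c u v` is a level above which all points over `(u, v)` satisfy `P`, and no others do. -/
structure IsLevelFunction (P : ℤ → ℤ → ℤ → Prop) (c : ℤ → ℤ → ℤ) : Prop where
  bounds : ∀ u v (_ : 0 ≤ u := by omega) (_ : 0 ≤ v := by omega),
    0 ≤ c u v ∧ c u v ≤ u ∧ c u v ≤ v
  iff_lt : ∀ u v m (_ : 1 ≤ m := by omega) (_ : m ≤ u := by omega) (_ : m ≤ v := by omega),
    P u v m ↔ c u v < m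

lemma IsLevelFunction.swap {P : ℤ → ℤ → ℤ → Prop} {c : ℤ → ℤ → ℤ}
    (hc : IsLevelFunction P c) :
    IsLevelFunction (fun u v m => P v u m) fun u v => c v u where
  bounds u v _ _ := by have := hc.bounds v u; omega
  iff_lt u v m _ _ _ := hc.iff_lt v u m

lemma exists_threshold {p : ℤ → Prop} {N : ℤ} (hN : 0 ≤ N)
    (hp : ∀ m, 1 ≤ m → m + 1 ≤ N → p m → p (m + 1)) :
    ∃ c, (0 ≤ c ∧ c ≤ N) ∧ ∀ m, 1 ≤ m → m ≤ N → (p m ↔ c < m) := by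
  induction N, hN using Int.leInduction with
  | base => exact ⟨0, by omega, by omega⟩
  | succ N hN ih =>
    obtain ⟨c, hcN, hc⟩ := ih fun m hm _ => hp m hm (by omega)
    by_cases hq : p (N + 1)
    · refine ⟨c, by omega, fun m hm hmN => ?_⟩
      rcases eq_or_lt_of_le hmN with rfl | hlt
      · exact iff_of_true hq (by omega)
      · exact hc m hm (by omega)
    · have hN' : 1 ≤ N → ¬ p N := fun h hpN => hq (hp N h le_rfl hpN)
      refine ⟨N + 1, by omega, fun m hm hmN => iff_of_false ?_ (by omega)⟩
      rcases eq_or_lt_of_le hmN with rfl | hlt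
      · exact hq
      · intro hpm
        have := (hc m hm (by omega)).1 hpm
        exact hN' (by omega) ((hc N (by omega) le_rfl).2 (by omega))

namespace IsGridIdeal

variable {k : ℤ} {P : ℤ → ℤ → ℤ → Prop} {c : ℤ → ℤ → ℤ}

lemma swap (hP : IsGridIdeal k P) : IsGridIdeal k fun u v m => P v u m where
  bounds h := by have := hP.bounds h; omega
  pred_left := hP.pred_right
  pred_right := hP.pred_left
  succ_left := hP.succ_right
  succ_right := hP.succ_left

lemma succ_level (hP : IsGridIdeal k P) {u v m : ℤ} (h : P u v m) (hu : m + 1 ≤ u)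
    (hv : m + 1 ≤ v) : P u v (m + 1) := by
  have := hP.pred_left (hP.succ_left h hv) (by omega)
  rwa [add_sub_cancel_right] at this

lemma exists_isLevelFunction (hP : IsGridIdeal k P) : ∃ c, IsLevelFunction P c := by
  have : ∀ u v, ∃ c, 0 ≤ u → 0 ≤ v → (0 ≤ c ∧ c ≤ min u v) ∧
      ∀ m, 1 ≤ m → m ≤ min u v → (P u v m ↔ c < m) := by
    intro u v
    by_cases h : 0 ≤ min u v
    · obtain ⟨c, hc⟩ := exists_threshold (p := P u v) h fun m _ hm' hm =>
        hP.succ_level hm (by omega) (by omega)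
      exact ⟨c, fun _ _ => hc⟩
    · exact ⟨0, by omega⟩
  choose c hc using this
  exact ⟨c, fun u v hu hv => by have := (hc u v hu hv).1; omega,
    fun u v m hm hu hv => (hc u v (by omega) (by omega)).2 m hm (by omega)⟩

lemma level_last (hP : IsGridIdeal k P) (hc : IsLevelFunction P c) {v : ℤ} (hv : 0 ≤ v)
    (hvk : v ≤ k) : c k v = v := by
  have hbounds := hc.bounds k v
  by_contra hne
  have := hP.bounds ((hc.iff_lt k v v).2 (by omega))
  omega

lemma level_step (hP : IsGridIdeal k P) (hc : IsLevelFunction P c) {u v : ℤ} (hu : 1 ≤ u)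
    (hv : 0 ≤ v) : c (u - 1) v ≤ c u v ∧ c u v ≤ c (u - 1) v + 1 := by
  have hbounds := hc.bounds u v
  have hbounds' := hc.bounds (u - 1) v
  constructor <;> by_contra! hlt
  · have hmem : P (u - 1) v (c u v + 1) :=
      hP.pred_left ((hc.iff_lt u v (c u v + 1)).2 (by omega)) (by omega)
    have := (hc.iff_lt (u - 1) v (c u v + 1)).1 hmem
    omega
  · have hmem : P (u - 1 + 1) v (c (u - 1) v + 1 + 1) :=
      hP.succ_left ((hc.iff_lt (u - 1) v (c (u - 1) v + 1)).2 (by omega)) (by omega)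
    rw [sub_add_cancel] at hmem
    have := (hc.iff_lt u v (c (u - 1) v + 1 + 1)).1 hmem
    omega

lemma isCornerSum (hP : IsGridIdeal k P) (hc : IsLevelFunction P c) : IsCornerSum k c where
  zero_left v _ _ := by have := hc.bounds 0 v; omega
  zero_right u _ _ := by have := hc.bounds u 0; omega
  last_left _ hv hvk := hP.level_last hc hv hvk
  last_right _ hu huk := hP.swap.level_last hc.swap hu huk
  row_step _ _ hu _ hv _ := hP.level_step hc hu hv
  col_step _ _ hu _ hv _ := hP.swap.level_step hc.swap hv hu

end IsGridIdeal

lemma isGridIdeal_of_forcedPart_subset {k : ℤ} {J : Finset (ℤ × ℤ × ℤ)}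
    (hJ : J ⊆ pentagramQFinset k)
    (hsub : forcedPart pentagramCovers (pentagramQFinset (k + 1)) J ⊆
      allowedPart pentagramCovers (pentagramQFinset k) (pentagramQFinset (k + 1)) J) :
    IsGridIdeal k fun u v m => gridPoint k u v m ∈ J := by
  have hbounds : ∀ {u v m}, gridPoint k u v m ∈ J → 0 < m ∧ u + v - k < m ∧ m ≤ u ∧ m ≤ v :=
    fun h => gridPoint_mem_pentagramQ.1 (mem_pentagramQFinset.1 (hJ h))
  have hclosed : ∀ {u v m a b l u' v'}, gridPoint k u v m ∈ J →
      a = u ∧ b = v ∧ l = m ∨ a = u + 1 ∧ b = v + 1 ∧ l = m + 1 →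
      a = u' ∧ b = v' + 1 ∨ a = u' + 1 ∧ b = v' → l ≤ u' → l ≤ v' → gridPoint k u' v' l ∈ J := by
    intro u v m a b l u' v' h hbelow habove hu hv
    have := hbounds h
    have hforced : gridPoint (k + 1) a b l ∈
        forcedPart pentagramCovers (pentagramQFinset (k + 1)) J :=
      Finset.mem_filter.2 ⟨mem_pentagramQFinset.2 (gridPoint_mem_pentagramQ.2 (by omega)),
        _, h, pentagramCovers_succ_gridPoint.2 hbelow⟩
    exact (Finset.mem_filter.1 (hsub hforced)).2 _
      (mem_pentagramQFinset.2 (gridPoint_mem_pentagramQ.2 (by omega)))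
      (pentagramCovers_gridPoint_succ.2 ⟨rfl, habove⟩)
  refine ⟨hbounds, fun {u v m} h hm => ?_, fun {u v m} h hm => ?_, fun {u v m} h hm => ?_,
    fun {u v m} h hm => ?_⟩ <;> have := hbounds h
  · exact hclosed (a := u) (b := v) h (by omega) (by omega) (by omega) (by omega)
  · exact hclosed (a := u) (b := v) h (by omega) (by omega) (by omega) (by omega)
  · exact hclosed (a := u + 1) (b := v + 1) h (by omega) (by omega) (by omega) (by omega)
  · exact hclosed (a := u + 1) (b := v + 1) h (by omega) (by omega) (by omega) (by omega)

lemma exists_eq_cornerIdeal {k : ℤ} {J : Finset (ℤ × ℤ × ℤ)} (hJ : J ⊆ pentagramQFinset k)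
    (hsub : forcedPart pentagramCovers (pentagramQFinset (k + 1)) J ⊆
      allowedPart pentagramCovers (pentagramQFinset k) (pentagramQFinset (k + 1)) J) :
    ∃ c, IsCornerSum k c ∧ J = cornerIdeal k c := by
  have hP := isGridIdeal_of_forcedPart_subset hJ hsub
  obtain ⟨c, hc⟩ := hP.exists_isLevelFunction
  refine ⟨c, hP.isCornerSum hc, eq_levelBand_of_forall_gridPoint hJ fun u v m => ?_⟩
  rw [gridPoint_mem_levelBand, le_min_iff]
  constructor
  · intro h
    have := hP.bounds h
    have := (hc.iff_lt u v m).1 h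
    omega
  · rintro ⟨huv, hm, hm'⟩
    have := hc.bounds u v
    exact (hc.iff_lt u v m).2 hm

/-! ### The F-polynomial as a sum over corner-sum functions -/

lemma IsCornerSum.cornerIdeal_subset {k : ℤ} {c : ℤ → ℤ → ℤ} (hc : IsCornerSum k c) :
    cornerIdeal k c ⊆ pentagramQFinset k := by
  intro p hp
  obtain ⟨u, v, m, rfl⟩ := exists_gridPoint_eq_of_mem_levelBand hp
  rw [cornerIdeal, gridPoint_mem_levelBand] at hp
  rw [pentagramQFinset, gridPoint_mem_levelBand]
  have := hc.bounds u v
  omega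

lemma IsCornerSum.cornerIdeal_ne_of_lt {k : ℤ} {c c' : ℤ → ℤ → ℤ} (hc : IsCornerSum k c)
    {u v : ℤ} (huv : (u, v) ∈ gridSquare (k - 1)) (hlt : c' u v < c u v) :
    cornerIdeal k c ≠ cornerIdeal k c' := by
  rw [mem_gridSquare] at huv
  dsimp only at huv
  have := hc.bounds u v
  have hmem : gridPoint k u v (c u v) ∈ cornerIdeal k c' :=
    gridPoint_mem_levelBand.2 (by omega)
  have hnot : gridPoint k u v (c u v) ∉ cornerIdeal k c := fun h =>
    lt_irrefl _ (gridPoint_mem_levelBand.1 h).2.1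
  exact fun h => hnot (h ▸ hmem)

lemma ne_neg_one_of_cornerWeight_ne_zero {R : Type*} [CommRing R] {k : ℤ} {X Z : ℤ → ℤ → R}
    {c : ℤ → ℤ → ℤ} (h : cornerWeight k X Z c ≠ 0) : ∀ x ∈ onesSet k c, Z x.1 x.2 ≠ -1 :=
  fun x hx hZ => right_ne_zero_of_mul h (Finset.prod_eq_zero hx (by rw [hZ, add_neg_cancel]))

lemma cornerWeight_ne_zero {R : Type*} [CommRing R] [IsDomain R] {k : ℤ} {X Z : ℤ → ℤ → R}
    {c : ℤ → ℤ → ℤ} (hX : ∀ u v, X u v ≠ 0) (hZ : ∀ u v, Z u v ≠ 0)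
    (hones : ∀ x ∈ onesSet k c, Z x.1 x.2 ≠ -1) : cornerWeight k X Z c ≠ 0 := by
  refine mul_ne_zero (mul_ne_zero ?_ ?_) ?_ <;> refine Finset.prod_ne_zero_iff.2 fun x hx => ?_
  · exact pow_ne_zero _ (hX x.1 x.2)
  · exact pow_ne_zero _ (hZ x.1 x.2)
  · exact fun h => hones x hx (eq_neg_of_add_eq_zero_right h)

/-- The corner-sum functions with a `1`-entry at a position of weight `-1` contribute nothing, so
`s` only has to represent the others. -/
theorem aeval_pentagramF_eq_sum_cornerWeight {R : Type*} [CommRing R] {y : ℤ → R} {j k : ℤ}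
    {s : Finset (ℤ → ℤ → ℤ)} (hs : ∀ c ∈ s, IsCornerSum k c)
    (hinj : Set.InjOn (cornerIdeal k) s)
    (hsurv : ∀ c, IsCornerSum k c →
      (∀ x ∈ onesSet k c, latticeWeight y j (k + 1) x.1 x.2 ≠ -1) →
      ∃ c' ∈ s, ∀ x ∈ gridSquare (k - 1), c x.1 x.2 = c' x.1 x.2) :
    aeval y (pentagramF j k) =
      ∑ c ∈ s, cornerWeight k (latticeWeight y j k) (latticeWeight y j (k + 1)) c := by
  have hweight {c} (hc : IsCornerSum k c) :=
    hc.prod_mul_sum_eq_cornerWeight (w := fun p => y (3 * p.1 + p.2.1 + j))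
      (apply_gridPoint_eq_latticeWeight y j k) (apply_gridPoint_eq_latticeWeight y j (k + 1))
  rw [aeval_pentagramF_eq_sum_powerset]
  refine (Finset.sum_of_injOn (cornerIdeal k) hinj (fun c hc => ?_) (fun J hJ hJs => ?_)
    fun c hc => (hweight (hs c hc)).symm).symm
  · exact Finset.mem_powerset.2 (hs c hc).cornerIdeal_subset
  · by_contra hne
    obtain ⟨T, hT, -⟩ := Finset.exists_ne_zero_of_sum_ne_zero (right_ne_zero_of_mul hne)
    have hsub := (Finset.mem_Icc.1 hT).1.trans (Finset.mem_Icc.1 hT).2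
    obtain ⟨c, hc, rfl⟩ := exists_eq_cornerIdeal (Finset.mem_powerset.1 hJ) hsub
    rw [hweight hc] at hne
    obtain ⟨c', hc', hcc'⟩ := hsurv c hc (ne_neg_one_of_cornerWeight_ne_zero hne)
    exact hJs ⟨c', hc', (levelBand_congr _ hcc').symm⟩

/-! ### Permutation matrices and their enlargements -/

@[to_additive]
lemma prod_Icc_succ_right {M : Type*} [CommMonoid M] {a b : ℤ} (hab : a ≤ b + 1) (f : ℤ → M) :
    ∏ i ∈ Finset.Icc a (b + 1), f i = (∏ i ∈ Finset.Icc a b, f i) * f (b + 1) := by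
  have hmem : b + 1 ∉ Finset.Icc a b := fun h => by have := Finset.mem_Icc.1 h; omega
  rw [← Finset.insert_Icc_right_eq_Icc_add_one hab, Finset.prod_insert hmem, mul_comm]

/-- Corner sums of the matrix with a single `1` in each row `a`, at column `σ a`. -/
def permSum (σ : ℤ → ℤ) (u v : ℤ) : ℤ := ∑ a ∈ Finset.Icc 1 u, if σ a ≤ v then 1 else 0

/-- Corner sums of the matrix of size `n + 1` obtained from the one of `permSum σ` by adding the
row `(0, …, 0, -1, 0, …, 0, 1)`, with `-1` at column `σ 1`, to row `a₀`. It is an alternating sign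
matrix if `σ` permutes `[1, n]`, `σ (n + 1) = σ 1` and `σ a₀ = 1`. -/
def bigSum (σ : ℤ → ℤ) (n a₀ u v : ℤ) : ℤ :=
  permSum σ u v +
    if a₀ ≤ u then (if n + 1 ≤ v then 1 else 0) - (if σ 1 ≤ v then 1 else 0) else 0

section PermSum

variable {σ : ℤ → ℤ} {n a₀ : ℤ}

lemma permSum_row {u : ℤ} (hu : 1 ≤ u) (v : ℤ) :
    permSum σ u v = permSum σ (u - 1) v + if σ u ≤ v then 1 else 0 := by
  have := sum_Icc_succ_right (a := 1) (b := u - 1) (by omega)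
    fun a => if σ a ≤ v then (1 : ℤ) else 0
  rwa [sub_add_cancel] at this

lemma permSum_col (u v : ℤ) :
    permSum σ u v = permSum σ u (v - 1) + ({a ∈ Finset.Icc 1 u | σ a = v} : Finset ℤ).card := by
  rw [permSum, permSum, Finset.card_filter, Nat.cast_sum, ← Finset.sum_add_distrib]
  refine Finset.sum_congr rfl fun a _ => ?_
  split_ifs <;> omega

lemma permSum_eq_zero {u v : ℤ} (h : ∀ a, 1 ≤ a → a ≤ u → v < σ a) : permSum σ u v = 0 :=
  Finset.sum_eq_zero fun a ha =>
    if_neg (h a (Finset.mem_Icc.1 ha).1 (Finset.mem_Icc.1 ha).2).not_ge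

lemma permSum_eq_left {u v : ℤ} (hu : 0 ≤ u) (h : ∀ a, 1 ≤ a → a ≤ u → σ a ≤ v) :
    permSum σ u v = u := by
  rw [permSum, Finset.sum_congr rfl fun a ha =>
    if_pos (h a (Finset.mem_Icc.1 ha).1 (Finset.mem_Icc.1 ha).2)]
  simp only [Finset.sum_const, Int.card_Icc, add_sub_cancel_right, nsmul_eq_mul, mul_one,
    Int.toNat_of_nonneg hu]

lemma permSum_last (hσ : Set.BijOn σ (Set.Icc 1 n) (Set.Icc 1 n)) {v : ℤ} (hv : 0 ≤ v)
    (hvn : v ≤ n) : permSum σ n v = v := by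
  have hbij : permSum σ n v = ∑ b ∈ Finset.Icc 1 n, if b ≤ v then 1 else 0 :=
    Finset.sum_nbij σ (fun a ha => Finset.mem_Icc.2 (hσ.mapsTo (Finset.mem_Icc.1 ha)))
      (by simpa only [Finset.coe_Icc] using hσ.injOn)
      (by simpa only [Finset.coe_Icc] using hσ.surjOn) fun _ _ => rfl
  have hfilter : {b ∈ Finset.Icc 1 n | b ≤ v} = Finset.Icc 1 v := by
    ext b
    simp only [Finset.mem_filter, Finset.mem_Icc]
    omega
  rw [hbij, Finset.sum_boole, hfilter, Int.card_Icc]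
  omega

lemma card_filter_eq_le_one (hσ : Set.InjOn σ (Set.Icc 1 n)) {u : ℤ} (hu : u ≤ n) (v : ℤ) :
    ({a ∈ Finset.Icc 1 u | σ a = v} : Finset ℤ).card ≤ 1 := by
  refine Finset.card_le_one.2 fun a ha b hb => ?_
  simp only [Finset.mem_filter, Finset.mem_Icc] at ha hb
  exact hσ ⟨ha.1.1, ha.1.2.trans hu⟩ ⟨hb.1.1, hb.1.2.trans hu⟩ (ha.2.trans hb.2.symm)

lemma isCornerSum_permSum (hσ : Set.BijOn σ (Set.Icc 1 n) (Set.Icc 1 n)) :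
    IsCornerSum n (permSum σ) where
  zero_left v _ _ := permSum_eq_zero fun a _ _ => by omega
  zero_right u _ hun := permSum_eq_zero fun a ha hau => (hσ.mapsTo ⟨ha, hau.trans hun⟩).1
  last_left _ hv hvn := permSum_last hσ hv hvn
  last_right u hu hun := permSum_eq_left hu fun a ha hau => (hσ.mapsTo ⟨ha, hau.trans hun⟩).2
  row_step u v hu _ _ _ := by
    rw [permSum_row hu]
    split_ifs <;> omega
  col_step u v _ hun _ _ := by
    have := card_filter_eq_le_one hσ.injOn hun v
    rw [permSum_col u v]
    omega

lemma eq_of_mem_onesSet_permSum {x : ℤ × ℤ} (hx : x ∈ onesSet n (permSum σ)) : x.2 = σ x.1 := by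
  obtain ⟨hx, hentry⟩ := Finset.mem_filter.1 hx
  rw [entry, permSum_row (mem_gridSquare.1 hx).1.1,
    permSum_row (mem_gridSquare.1 hx).1.1 (x.2 - 1)] at hentry
  split_ifs at hentry <;> omega

lemma bigSum_row {u : ℤ} (hu : 1 ≤ u) (v : ℤ) :
    bigSum σ n a₀ u v = bigSum σ n a₀ (u - 1) v + (if σ u ≤ v then 1 else 0) +
      if u = a₀ then (if n + 1 ≤ v then 1 else 0) - (if σ 1 ≤ v then 1 else 0) else 0 := by
  rw [bigSum, bigSum, permSum_row hu]
  split_ifs <;> omega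

section

variable (hn : 0 < n) (hσ : Set.BijOn σ (Set.Icc 1 n) (Set.Icc 1 n)) (hσn : σ (n + 1) = σ 1)
include hn hσ

lemma bigSum_col_step {u v : ℤ} (ha₀ : 1 ≤ a₀) (hun : u ≤ n) :
    bigSum σ n a₀ u (v - 1) ≤ bigSum σ n a₀ u v ∧
      bigSum σ n a₀ u v ≤ bigSum σ n a₀ u (v - 1) + 1 := by
  have hσ1 : σ 1 ≤ n := (hσ.mapsTo ⟨le_rfl, by omega⟩).2
  have hle := card_filter_eq_le_one hσ.injOn hun v
  have hone : 1 ≤ u → σ 1 = v → 0 < ({a ∈ Finset.Icc 1 u | σ a = v} : Finset ℤ).card :=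
    fun hu h => Finset.card_pos.2 ⟨1, Finset.mem_filter.2 ⟨Finset.mem_Icc.2 ⟨le_rfl, hu⟩, h⟩⟩
  have hzero : n < v → ({a ∈ Finset.Icc 1 u | σ a = v} : Finset ℤ).card = 0 := fun h =>
    Finset.card_eq_zero.2 <| Finset.filter_eq_empty_iff.2 fun a ha hav => by
      have := hσ.mapsTo ⟨(Finset.mem_Icc.1 ha).1, (Finset.mem_Icc.1 ha).2.trans hun⟩
      exact absurd this.2 (by omega)
  rw [bigSum, bigSum, permSum_col u v]
  split_ifs <;> omega

include hσn

lemma apply_mem_Icc {a : ℤ} (ha : 1 ≤ a) (han : a ≤ n + 1) : 1 ≤ σ a ∧ σ a ≤ n := by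
  rcases eq_or_lt_of_le han with rfl | hlt
  · rw [hσn]
    exact hσ.mapsTo ⟨le_rfl, by omega⟩
  · exact hσ.mapsTo ⟨ha, by omega⟩

lemma bigSum_last (ha₀n : a₀ ≤ n + 1) {v : ℤ} (hv : 0 ≤ v) (hvn : v ≤ n + 1) :
    bigSum σ n a₀ (n + 1) v = v := by
  have hσ1 := apply_mem_Icc hn hσ hσn le_rfl (by omega)
  rcases eq_or_lt_of_le hvn with rfl | hlt
  · rw [bigSum, permSum_eq_left (by omega) fun a ha han =>
      (apply_mem_Icc hn hσ hσn ha han).2.trans (by omega)]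
    split_ifs <;> omega
  · rw [bigSum, permSum_row (by omega), add_sub_cancel_right,
      permSum_last hσ hv (by omega), hσn]
    split_ifs <;> omega

lemma isCornerSum_bigSum (ha₀ : 1 ≤ a₀) (ha₀n : a₀ ≤ n + 1) (hσa₀ : σ a₀ = 1) :
    IsCornerSum (n + 1) (bigSum σ n a₀) where
  zero_left v _ _ := by
    rw [bigSum, permSum_eq_zero fun a _ _ => by omega]
    split_ifs <;> omega
  zero_right u _ hun := by
    have hσ1 := apply_mem_Icc hn hσ hσn le_rfl (by omega)
    rw [bigSum, permSum_eq_zero fun a ha hau =>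
      (apply_mem_Icc hn hσ hσn ha (hau.trans hun)).1]
    split_ifs <;> omega
  last_left v hv hvn := bigSum_last hn hσ hσn ha₀n hv hvn
  last_right u hu hun := by
    have hσ1 := apply_mem_Icc hn hσ hσn le_rfl (by omega)
    rw [bigSum, permSum_eq_left hu fun a ha hau =>
      (apply_mem_Icc hn hσ hσn ha (hau.trans hun)).2.trans (by omega)]
    split_ifs <;> omega
  row_step u v hu _ _ _ := by
    have hσ1 := apply_mem_Icc hn hσ hσn le_rfl (by omega)
    rw [bigSum_row hu]
    rcases eq_or_ne u a₀ with rfl | hne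
    · rw [hσa₀]
      split_ifs <;> omega
    · split_ifs <;> omega
  col_step u v hu hun hv hvn := by
    rcases eq_or_lt_of_le hun with rfl | hlt
    · rw [bigSum_last hn hσ hσn ha₀n (by omega) hvn,
        bigSum_last hn hσ hσn ha₀n (by omega) (by omega)]
      omega
    · exact bigSum_col_step hn hσ ha₀ (by omega)

end

lemma eq_or_eq_of_mem_onesSet_bigSum (hσa₀ : σ a₀ = 1) {x : ℤ × ℤ}
    (hx : x ∈ onesSet (n + 1) (bigSum σ n a₀)) :
    x.2 = σ x.1 ∨ σ x.1 = 1 ∧ x.2 = n + 1 := by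
  obtain ⟨hx, hentry⟩ := Finset.mem_filter.1 hx
  rw [entry, bigSum_row (mem_gridSquare.1 hx).1.1,
    bigSum_row (mem_gridSquare.1 hx).1.1 (x.2 - 1)] at hentry
  rcases eq_or_ne x.1 a₀ with h | hne
  · rw [if_pos h, if_pos h, h, hσa₀] at hentry
    rw [h, hσa₀]
    split_ifs at hentry <;> omega
  · rw [if_neg hne, if_neg hne] at hentry
    split_ifs at hentry <;> omega

end PermSum

/-! ### Corner sums determined by their `1`-entries -/

lemma eq_ite_of_jump {f : ℤ → ℤ} {k β v : ℤ} (h0 : f 0 = 0) (hk : f k = 1)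
    (hf : ∀ b, 0 ≤ b → b ≤ k → f b = 0 ∨ f b = 1)
    (hjump : ∀ b, 1 ≤ b → b ≤ k → f b - f (b - 1) = 1 → b = β) (hv : 0 ≤ v) (hvk : v ≤ k) :
    f v = if β ≤ v then 1 else 0 := by
  split_ifs with hβ
  · induction v, hvk using Int.leInductionDown with
    | base => exact hk
    | pred v hvk ih =>
      have := ih (by omega) (by omega)
      have := hf (v - 1) hv (by omega)
      have := hjump v (by omega) hvk
      omega
  · induction v, hv using Int.leInduction with
    | base => exact h0
    | succ v hv ih =>
      have := ih (by omega) (by omega)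
      have := hf (v + 1) (by omega) hvk
      have := hjump (v + 1) (by omega) hvk
      rw [add_sub_cancel_right] at this
      omega

namespace IsCornerSum

variable {k : ℤ} {c c' : ℤ → ℤ → ℤ}

lemma row_eq_of_mem_onesSet (hc : IsCornerSum k c) {a β v : ℤ} (ha : 1 ≤ a) (hak : a ≤ k)
    (hβ : ∀ b, (a, b) ∈ onesSet k c → b = β) (hv : 0 ≤ v) (hvk : v ≤ k) :
    c a v - c (a - 1) v = if β ≤ v then 1 else 0 := by
  refine eq_ite_of_jump (f := fun v => c a v - c (a - 1) v) (k := k) ?_ ?_ (fun b hb hbk => ?_)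
    (fun b hb hbk h => hβ b (Finset.mem_filter.2 ⟨mem_gridSquare.2 ⟨⟨ha, hak⟩, hb, hbk⟩, ?_⟩))
    hv hvk
  · rw [hc.zero_right a, hc.zero_right (a - 1), sub_zero]
  · rw [hc.last_right a, hc.last_right (a - 1), sub_sub_cancel]
  · have := hc.row_step a b
    omega
  · dsimp only [entry] at h ⊢
    omega

lemma first_row_eq_or_eq (hc : IsCornerSum k c) (hk : 1 ≤ k)
    (hones : ∀ b, (1, b) ∈ onesSet k c → b = 1 ∨ b = k) :
    (∀ v, 0 ≤ v → v ≤ k → c 1 v = if 1 ≤ v then 1 else 0) ∨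
      ∀ v, 0 ≤ v → v ≤ k → c 1 v = if k ≤ v then 1 else 0 := by
  have hrow {β v : ℤ} (hβ : ∀ b, (1, b) ∈ onesSet k c → b = β) (hv : 0 ≤ v) (hvk : v ≤ k) :
      c 1 v = if β ≤ v then 1 else 0 := by
    rw [← hc.row_eq_of_mem_onesSet le_rfl hk hβ hv hvk, sub_self, hc.zero_left v, sub_zero]
  have hentry {b : ℤ} (hb : (1, b) ∈ onesSet k c) : c 1 b - c 1 (b - 1) = 1 := by
    obtain ⟨hmem, h⟩ := Finset.mem_filter.1 hb
    have := mem_gridSquare.1 hmem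
    dsimp only [entry] at h this
    rw [sub_self, hc.zero_left b, hc.zero_left (b - 1)] at h
    omega
  have hc1 : c 1 0 = 0 := hc.zero_right 1
  have := hc.col_step 1 1
  rw [sub_self] at this
  rcases (by omega : c 1 1 = 1 ∨ c 1 1 = 0) with h | h
  · refine Or.inl fun v => hrow fun b hb => (hones b hb).elim id ?_
    rintro rfl
    by_contra hne
    have := (le_and_le_add_sub_of_step (fun i _ _ => hc.col_step 1 i)
      (by omega : 1 ≤ b - 1) le_rfl).1
    have := hentry hb
    have := hc.last_right 1
    omega
  · refine Or.inr fun v => hrow fun b hb => (hones b hb).elim ?_ id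
    rintro rfl
    have := hentry hb
    rw [sub_self] at this
    omega

/-- The rows before `a₀` are compared from the top, the others from the bottom. -/
lemma eq_of_row_eq (hc : IsCornerSum k c) (hc' : IsCornerSum k c') (a₀ : ℤ)
    (h : ∀ a v, 1 ≤ a → a ≤ k → a ≠ a₀ → 0 ≤ v → v ≤ k →
      c a v - c (a - 1) v = c' a v - c' (a - 1) v) :
    ∀ x ∈ gridSquare (k - 1), c x.1 x.2 = c' x.1 x.2 := by
  rintro ⟨u, v⟩ hx
  obtain ⟨⟨hu, huk⟩, hv, hvk⟩ := mem_gridSquare.1 hx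
  dsimp only at *
  clear hx
  rcases lt_or_ge u a₀ with hlt | hge
  · replace hu : 0 ≤ u := by omega
    induction u, hu using Int.leInduction with
    | base => rw [hc.zero_left v, hc'.zero_left v]
    | succ u hu ih =>
      have := h (u + 1) v
      rw [add_sub_cancel_right] at this
      have := ih (by omega) (by omega)
      omega
  · replace huk : u ≤ k := by omega
    induction u, huk using Int.leInductionDown with
    | base => rw [hc.last_left v, hc'.last_left v]
    | pred u huk ih =>
      have := h u v
      have := ih (by omega) (by omega)
      omega

end IsCornerSum

section PermSum

variable {σ : ℤ → ℤ} {n a₀ : ℤ} {c : ℤ → ℤ → ℤ}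

lemma eq_permSum_of_mem_onesSet (hσ : Set.BijOn σ (Set.Icc 1 n) (Set.Icc 1 n))
    (hc : IsCornerSum n c) (hones : ∀ x ∈ onesSet n c, x.2 = σ x.1) :
    ∀ x ∈ gridSquare (n - 1), c x.1 x.2 = permSum σ x.1 x.2 :=
  hc.eq_of_row_eq (isCornerSum_permSum hσ) 0 fun a v ha han _ hv hvn => by
    have hβ b (hb : (a, b) ∈ onesSet n c) : b = σ a := hones _ hb
    rw [hc.row_eq_of_mem_onesSet ha han hβ hv hvn, permSum_row ha, add_sub_cancel_left]

lemma bigSum_first (ha₀ : 1 ≤ a₀) (v : ℤ) :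
    bigSum σ n a₀ 1 v = (if σ 1 ≤ v then 1 else 0) +
      if 1 = a₀ then (if n + 1 ≤ v then 1 else 0) - (if σ 1 ≤ v then 1 else 0) else 0 := by
  have hzero : bigSum σ n a₀ 0 v = 0 := by
    rw [bigSum, permSum_eq_zero fun a _ _ => by omega, if_neg (by omega), add_zero]
  rw [bigSum_row le_rfl, sub_self, hzero, zero_add]

lemma row_eq_bigSum_row_of_apply_ne_one (hσa₀ : σ a₀ = 1) (hc : IsCornerSum (n + 1) c)
    (hones : ∀ x ∈ onesSet (n + 1) c, x.2 = σ x.1 ∨ σ x.1 = 1 ∧ x.2 = n + 1) {a v : ℤ}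
    (hσa : σ a ≠ 1) (ha : 1 ≤ a) (han : a ≤ n + 1) (hv : 0 ≤ v) (hvn : v ≤ n + 1) :
    c a v - c (a - 1) v = bigSum σ n a₀ a v - bigSum σ n a₀ (a - 1) v := by
  have hβ b (hb : (a, b) ∈ onesSet (n + 1) c) : b = σ a :=
    (hones _ hb).resolve_right fun h => hσa h.1
  have hne : a ≠ a₀ := by rintro rfl; exact hσa hσa₀
  rw [hc.row_eq_of_mem_onesSet ha han hβ hv hvn, bigSum_row ha, if_neg hne, add_zero,
    add_sub_cancel_left]

variable (hn : 0 < n) (hσ : Set.BijOn σ (Set.Icc 1 n) (Set.Icc 1 n)) (hσn : σ (n + 1) = σ 1)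
  (hc : IsCornerSum (n + 1) c)
  (hones : ∀ x ∈ onesSet (n + 1) c, x.2 = σ x.1 ∨ σ x.1 = 1 ∧ x.2 = n + 1)
include hn hσ hσn hc hones

lemma eq_bigSum_of_apply_one_ne_one (hσ1 : σ 1 ≠ 1) (ha₀ : 1 ≤ a₀) (ha₀n : a₀ ≤ n)
    (hσa₀ : σ a₀ = 1) : ∀ x ∈ gridSquare (n + 1 - 1), c x.1 x.2 = bigSum σ n a₀ x.1 x.2 := by
  refine hc.eq_of_row_eq (isCornerSum_bigSum hn hσ hσn ha₀ (by omega) hσa₀) a₀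
    fun a v ha han hne => row_eq_bigSum_row_of_apply_ne_one hσa₀ hc hones (fun hσa => ?_) ha han
  rcases eq_or_lt_of_le han with rfl | hlt
  · exact hσ1 (hσn ▸ hσa)
  · exact hne (hσ.injOn ⟨ha, by omega⟩ ⟨ha₀, ha₀n⟩ (hσa.trans hσa₀.symm))

lemma eq_bigSum_or_eq_bigSum_of_apply_one_eq_one (hσ1 : σ 1 = 1) :
    (∀ x ∈ gridSquare (n + 1 - 1), c x.1 x.2 = bigSum σ n 1 x.1 x.2) ∨
      ∀ x ∈ gridSquare (n + 1 - 1), c x.1 x.2 = bigSum σ n (n + 1) x.1 x.2 := by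
  have hrow {a₀ : ℤ} (ha₀ : 1 ≤ a₀) (ha₀n : a₀ ≤ n + 1) (hσa₀ : σ a₀ = 1)
      (h1 : ∀ v, 0 ≤ v → v ≤ n + 1 → c 1 v = bigSum σ n a₀ 1 v) :
      ∀ x ∈ gridSquare (n + 1 - 1), c x.1 x.2 = bigSum σ n a₀ x.1 x.2 := by
    have hbig := isCornerSum_bigSum hn hσ hσn ha₀ ha₀n hσa₀
    refine hc.eq_of_row_eq hbig (n + 1) fun a v ha han hne hv hvn => ?_
    rcases eq_or_ne a 1 with rfl | hne1
    · rw [sub_self, h1 v hv hvn, hc.zero_left v, hbig.zero_left v]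
    · exact row_eq_bigSum_row_of_apply_ne_one hσa₀ hc hones (fun hσa => hne1 <|
        hσ.injOn ⟨ha, by omega⟩ ⟨le_rfl, by omega⟩ (hσa.trans hσ1.symm)) ha han hv hvn
  have hσ1n : 1 ≠ n + 1 := by omega
  have hfirst : ∀ b, (1, b) ∈ onesSet (n + 1) c → b = 1 ∨ b = n + 1 := fun b hb =>
    (hones _ hb).imp (fun h => h.trans hσ1) fun h => h.2
  rcases hc.first_row_eq_or_eq (by omega) hfirst with h | h
  · refine Or.inr (hrow (by omega) le_rfl (hσn.trans hσ1) fun v hv hvn => ?_)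
    rw [h v hv hvn, bigSum_first (by omega), if_neg hσ1n, hσ1, add_zero]
  · refine Or.inl (hrow le_rfl (by omega) hσ1 fun v hv hvn => ?_)
    rw [h v hv hvn, bigSum_first le_rfl, if_pos rfl, add_sub_cancel]

end PermSum

/-! ### Columns in a residue class -/

lemma bijOn_Icc_of_dvd_sub {σ : ℤ → ℤ} {n : ℤ}
    (hσ : Set.MapsTo σ (Set.Icc 1 n) (Set.Icc 1 n))
    (hdvd : ∀ a b, σ a = σ b → n ∣ a - b) : Set.BijOn σ (Set.Icc 1 n) (Set.Icc 1 n) := by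
  have hinj : Set.InjOn σ (Set.Icc 1 n) := fun a ⟨ha, han⟩ b ⟨hb, hbn⟩ hab =>
    sub_eq_zero.1 (Int.eq_zero_of_abs_lt_dvd (hdvd a b hab) (abs_lt.2 (by omega)))
  refine ⟨hσ, hinj, ?_⟩
  rw [← Finset.coe_Icc] at hσ hinj ⊢
  exact Finset.surjOn_of_injOn_of_card_le _ hσ hinj le_rfl

/-- The column `b` of `[1, n]` with `2 a + b ≡ C` modulo `n`. -/
def classCol (n C a : ℤ) : ℤ := (C - 2 * a - 1) % n + 1

section ClassCol

variable {n C : ℤ}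

lemma classCol_mem_Icc (hn : 0 < n) (a : ℤ) : classCol n C a ∈ Set.Icc 1 n := by
  have := Int.emod_nonneg (C - 2 * a - 1) hn.ne'
  have := Int.emod_lt_of_pos (C - 2 * a - 1) hn
  rw [classCol, Set.mem_Icc]
  omega

lemma dvd_classCol (n C a : ℤ) : n ∣ 2 * a + classCol n C a - C := by
  rw [classCol, ← dvd_neg, show -(2 * a + ((C - 2 * a - 1) % n + 1) - C) =
    C - 2 * a - 1 - (C - 2 * a - 1) % n by omega]
  exact Int.dvd_self_sub_emod

lemma dvd_iff_dvd_sub_classCol (a b : ℤ) : n ∣ 2 * a + b - C ↔ n ∣ b - classCol n C a := by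
  refine dvd_iff_dvd_of_dvd_sub ?_
  rw [show 2 * a + b - C - (b - classCol n C a) = 2 * a + classCol n C a - C by ring]
  exact dvd_classCol n C a

lemma dvd_iff_eq_classCol {a b : ℤ} (hb : 1 ≤ b) (hbn : b ≤ n) :
    n ∣ 2 * a + b - C ↔ b = classCol n C a := by
  have hcol := classCol_mem_Icc (n := n) (C := C) (by omega) a
  rw [Set.mem_Icc] at hcol
  refine ⟨fun h => ?_, fun h => h ▸ dvd_classCol n C a⟩
  have := Int.eq_zero_of_abs_lt_dvd ((dvd_iff_dvd_sub_classCol a b).1 h)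
    (abs_lt.2 (by omega))
  omega

lemma dvd_iff_eq_classCol_or {a b : ℤ} (hn : 0 < n) (hb : 1 ≤ b) (hbn : b ≤ n + 1) :
    n ∣ 2 * a + b - C ↔ b = classCol n C a ∨ classCol n C a = 1 ∧ b = n + 1 := by
  have hcol := classCol_mem_Icc (C := C) hn a
  rw [Set.mem_Icc] at hcol
  rcases hbn.lt_or_eq with hlt | rfl
  · rw [dvd_iff_eq_classCol hb (by omega)]
    omega
  · rw [← dvd_sub_self_right, show 2 * a + (n + 1) - C - n = 2 * a + 1 - C by ring,
      dvd_iff_eq_classCol le_rfl (by omega)]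
    omega

lemma classCol_add_self (a : ℤ) : classCol n C (n + a) = classCol n C a := by
  rw [classCol, show C - 2 * (n + a) - 1 = C - 2 * a - 1 + n * (-2) by ring,
    Int.add_mul_emod_self_left, classCol]

lemma bijOn_classCol (hodd : Odd n) :
    Set.BijOn (classCol n C) (Set.Icc 1 n) (Set.Icc 1 n) := by
  refine bijOn_Icc_of_dvd_sub (fun a ha => classCol_mem_Icc (by have := ha.1.trans ha.2; omega) a)
    fun a b hab => ?_
  obtain ⟨m, rfl⟩ := hodd
  have hdvd : 2 * m + 1 ∣ 2 * (a - b) := by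
    have := dvd_sub (dvd_classCol (2 * m + 1) C a) (dvd_classCol (2 * m + 1) C b)
    rwa [hab, show 2 * a + _ - C - (2 * b + _ - C) = 2 * (a - b) by ring] at this
  have := dvd_sub (dvd_mul_right (2 * m + 1) (a - b)) (dvd_mul_of_dvd_right hdvd m)
  rwa [show (2 * m + 1) * (a - b) - m * (2 * (a - b)) = a - b by ring] at this

end ClassCol

/-! ### Lowering a corner-sum function by one -/

lemma prod_ite_eq_or_eq {ι M : Type*} [CommMonoid M] {s : Finset ι} {p q : ι} (hp : p ∈ s)
    (hq : q ∈ s) (hpq : p ≠ q) (f : ι → M) :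
    ∏ x ∈ s, (if x = p ∨ x = q then f x else 1) = f p * f q := by
  have hfilter : {x ∈ s | x = p ∨ x = q} = {p, q} := by
    ext x
    simp only [Finset.mem_filter, Finset.mem_insert, Finset.mem_singleton, and_iff_right_iff_imp]
    rintro (rfl | rfl) <;> assumption
  rw [← Finset.prod_filter, hfilter, Finset.prod_pair hpq]

namespace IsCornerSum

variable {k : ℤ} {c c' : ℤ → ℤ → ℤ}

lemma entry_le_one (hc : IsCornerSum k c) {a b : ℤ} (ha : 1 ≤ a) (hak : a ≤ k) (hb : 1 ≤ b)
    (hbk : b ≤ k) : entry c a b ≤ 1 := by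
  have := hc.row_step a b
  have := hc.row_step a (b - 1)
  rw [entry]
  omega

lemma entry_nonneg_of_eq_one_or_eq (hc : IsCornerSum k c) {a b : ℤ} (ha : 1 ≤ a) (hak : a ≤ k)
    (hb : 1 ≤ b) (hbk : b ≤ k) (h : a = 1 ∨ a = k) : 0 ≤ entry c a b := by
  rw [entry]
  rcases h with rfl | rfl
  · have := hc.col_step 1 b
    rw [sub_self, hc.zero_left b, hc.zero_left (b - 1)]
    omega
  · have := hc.col_step (a - 1) b
    rw [hc.last_left b, hc.last_left (b - 1)]
    omega

variable (hk : 2 ≤ k) (hc : IsCornerSum k c) (hc' : IsCornerSum k c')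
  (hlower : ∀ x ∈ gridSquare (k - 1), c' x.1 x.2 = c x.1 x.2 - 1)
include hc hc' hlower

lemma eq_sub_ite_of_lower {u v : ℤ} (hu : 0 ≤ u) (huk : u ≤ k) (hv : 0 ≤ v) (hvk : v ≤ k) :
    c' u v = c u v - if 1 ≤ u ∧ u < k ∧ 1 ≤ v ∧ v < k then 1 else 0 := by
  split_ifs with h
  · exact hlower (u, v) (mem_gridSquare.2 (by omega))
  · have : u = 0 ∨ u = k ∨ v = 0 ∨ v = k := by omega
    rcases this with rfl | rfl | rfl | rfl
    · rw [hc.zero_left v, hc'.zero_left v, sub_zero]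
    · rw [hc.last_left v, hc'.last_left v, sub_zero]
    · rw [hc.zero_right u, hc'.zero_right u, sub_zero]
    · rw [hc.last_right u, hc'.last_right u, sub_zero]

include hk

lemma entry_lower {a b : ℤ} (ha : 1 ≤ a) (hak : a ≤ k) (hb : 1 ≤ b) (hbk : b ≤ k) :
    entry c' a b =
      (entry c a b - if (a, b) = (1, 1) ∨ (a, b) = (k, k) then 1 else 0) +
        if (a, b) = (1, k) ∨ (a, b) = (k, 1) then 1 else 0 := by
  have hval {u v} := hc.eq_sub_ite_of_lower hc' hlower (u := u) (v := v)
  simp only [entry, Prod.mk.injEq]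
  rw [hval (by omega) hak (by omega) hbk, hval (by omega) (by omega) (by omega) hbk,
    hval (by omega) hak (by omega) (by omega),
    hval (by omega) (by omega) (by omega) (by omega)]
  split_ifs <;> omega

lemma forcedLevel_lower {a b : ℤ} (ha : 1 ≤ a) (hak : a ≤ k) (hb : 1 ≤ b) (hbk : b ≤ k) :
    forcedLevel c' a b = forcedLevel c a b - 1 +
      if (a, b) = (1, k) ∨ (a, b) = (k, 1) then 1 else 0 := by
  have hval {u v} := hc.eq_sub_ite_of_lower hc' hlower (u := u) (v := v)
  have hab := hval (by omega) hak (by omega) hbk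
  have hab' := hval (u := a - 1) (v := b - 1) (by omega) (by omega) (by omega) (by omega)
  have := hc.bounds a b
  have := hc.bounds (a - 1) (b - 1)
  have := hc'.bounds a b
  have := hc'.bounds (a - 1) (b - 1)
  simp only [forcedLevel, Prod.mk.injEq]
  split_ifs at hab hab' ⊢ <;> omega

lemma prod_onesSet_lower {M : Type*} [CommMonoid M] (f : ℤ × ℤ → M) :
    (∏ x ∈ onesSet k c', f x) * (f (1, 1) * f (k, k)) =
      (∏ x ∈ onesSet k c, f x) * (f (1, k) * f (k, 1)) := by
  have hmem {a b : ℤ} (ha : a = 1 ∨ a = k) (hb : b = 1 ∨ b = k) : (a, b) ∈ gridSquare k :=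
    mem_gridSquare.2 (by omega)
  have hne : ((1, 1) : ℤ × ℤ) ≠ (k, k) := fun h => by have := congrArg Prod.fst h; omega
  have hne' : ((1, k) : ℤ × ℤ) ≠ (k, 1) := fun h => by have := congrArg Prod.fst h; omega
  rw [onesSet, onesSet, Finset.prod_filter, Finset.prod_filter,
    ← prod_ite_eq_or_eq (hmem (.inl rfl) (.inl rfl)) (hmem (.inr rfl) (.inr rfl)) hne,
    ← prod_ite_eq_or_eq (hmem (.inl rfl) (.inr rfl)) (hmem (.inr rfl) (.inl rfl)) hne',
    ← Finset.prod_mul_distrib, ← Finset.prod_mul_distrib]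
  refine Finset.prod_congr rfl fun ⟨a, b⟩ hx => ?_
  obtain ⟨⟨ha : 1 ≤ a, hak : a ≤ k⟩, hb : 1 ≤ b, hbk : b ≤ k⟩ := mem_gridSquare.1 hx
  have hentry := hc.entry_lower hk hc' hlower ha hak hb hbk
  have := hc.entry_le_one ha hak hb hbk
  have := hc'.entry_le_one ha hak hb hbk
  have := hc.entry_nonneg_of_eq_one_or_eq ha hak hb hbk
  have := hc'.entry_nonneg_of_eq_one_or_eq ha hak hb hbk
  simp only [Prod.mk.injEq] at hentry ⊢
  split_ifs at hentry ⊢ <;> first | omega | simp only [mul_one, one_mul]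

lemma prod_forcedLevel_lower {M : Type*} [CommMonoid M] (Z : ℤ → ℤ → M) :
    (∏ x ∈ gridSquare k, Z x.1 x.2 ^ (min x.1 x.2 - forcedLevel c' x.1 x.2).toNat) *
        (Z 1 k * Z k 1) =
      (∏ x ∈ gridSquare k, Z x.1 x.2 ^ (min x.1 x.2 - forcedLevel c x.1 x.2).toNat) *
        ∏ x ∈ gridSquare k, Z x.1 x.2 := by
  have hne : ((1, k) : ℤ × ℤ) ≠ (k, 1) := fun h => by have := congrArg Prod.fst h; omega
  rw [← prod_ite_eq_or_eq (s := gridSquare k) (mem_gridSquare.2 (by omega))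
      (mem_gridSquare.2 (by omega)) hne
      fun x => Z x.1 x.2,
    ← Finset.prod_mul_distrib, ← Finset.prod_mul_distrib]
  refine Finset.prod_congr rfl fun ⟨a, b⟩ hx => ?_
  obtain ⟨⟨ha : 1 ≤ a, hak : a ≤ k⟩, hb : 1 ≤ b, hbk : b ≤ k⟩ := mem_gridSquare.1 hx
  have hlevel := hc.forcedLevel_lower hk hc' hlower ha hak hb hbk
  have := hc.forcedLevel_le_min hx
  dsimp only at this ⊢
  split_ifs at hlevel ⊢ with hcorner
  · rw [hlevel, sub_add_cancel]
  · rw [mul_one, ← pow_succ]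
    congr 1
    omega

end IsCornerSum

lemma IsCornerSum.cornerWeight_lower {R : Type*} [CommSemiring R] {k : ℤ} {c c' : ℤ → ℤ → ℤ}
    (hk : 2 ≤ k) (hc : IsCornerSum k c) (hc' : IsCornerSum k c')
    (hlower : ∀ x ∈ gridSquare (k - 1), c' x.1 x.2 = c x.1 x.2 - 1) (X Z : ℤ → ℤ → R) :
    cornerWeight k X Z c' * (Z 1 k * Z k 1) * ((1 + Z 1 1) * (1 + Z k k)) =
      cornerWeight k X Z c * (∏ x ∈ gridSquare (k - 1), X x.1 x.2) *
        (∏ x ∈ gridSquare k, Z x.1 x.2) * ((1 + Z 1 k) * (1 + Z k 1)) := by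
  have hX : ∏ x ∈ gridSquare (k - 1), X x.1 x.2 ^ (min x.1 x.2 - c' x.1 x.2).toNat =
      (∏ x ∈ gridSquare (k - 1), X x.1 x.2 ^ (min x.1 x.2 - c x.1 x.2).toNat) *
        ∏ x ∈ gridSquare (k - 1), X x.1 x.2 := by
    rw [← Finset.prod_mul_distrib]
    refine Finset.prod_congr rfl fun x hx => ?_
    have hxk := mem_gridSquare.1 hx
    have := hc.bounds x.1 x.2
    rw [← pow_succ, hlower x hx]
    congr 1
    omega
  have hZ := hc.prod_forcedLevel_lower hk hc' hlower Z
  have hones := hc.prod_onesSet_lower hk hc' hlower fun x => 1 + Z x.1 x.2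
  rw [cornerWeight, cornerWeight, hX, mul_right_comm _ _ (Z 1 k * Z k 1),
    mul_assoc _ _ (Z 1 k * Z k 1), hZ, mul_assoc _ _ ((1 + Z 1 1) * _), hones]
  ring

/-! ### Products over residue classes -/

section Products

variable {R : Type*}

lemma prod_ite_eq_neg_one {ι : Type*} [DecidableEq ι] [CommRing R] {s : Finset ι}
    (hs : Odd s.card) {b₀ : ι} (hb₀ : b₀ ∈ s) (e : R) :
    ∏ b ∈ s, (if b = b₀ then e else -1) = e := by
  have hrest : ∏ b ∈ s.erase b₀, (if b = b₀ then e else -1) = (-1 : R) ^ (s.erase b₀).card :=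
    Finset.prod_eq_pow_card fun b hb => if_neg (Finset.ne_of_mem_erase hb)
  have heven : Even (s.erase b₀).card := by
    rw [Finset.card_erase_of_mem hb₀]
    exact hs.tsub_odd odd_one
  rw [← Finset.mul_prod_erase _ _ hb₀, hrest, heven.neg_one_pow, if_pos rfl, mul_one]

lemma odd_card_Icc_one {n : ℤ} (hn : 0 ≤ n) (hodd : Odd n) : Odd (Finset.Icc 1 n).card := by
  rwa [Int.card_Icc, add_sub_cancel_right, ← Int.odd_coe_nat, Int.toNat_of_nonneg hn]

lemma prod_Icc_add_of_periodic {M : Type*} [CommMonoid M] {f : ℤ → M} {n : ℤ}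
    (hf : Function.Periodic f n) (x : ℤ) :
    ∏ i ∈ Finset.Icc 1 n, f (x + i) = ∏ i ∈ Finset.Icc 1 n, f i := by
  have hbij : Set.BijOn (fun i => (x + i - 1) % n + 1) (Set.Icc 1 n) (Set.Icc 1 n) := by
    refine bijOn_Icc_of_dvd_sub (fun i hi => ?_) fun i i' h => ?_
    · have hn : 0 < n := by have := hi.1.trans hi.2; omega
      have := Int.emod_nonneg (x + i - 1) hn.ne'
      have := Int.emod_lt_of_pos (x + i - 1) hn
      rw [Set.mem_Icc]
      omega
    · have := Int.ModEq.dvd (add_right_cancel h).symm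
      rwa [show x + i - 1 - (x + i' - 1) = i - i' by ring] at this
  rw [← Finset.coe_Icc] at hbij
  refine Finset.prod_nbij _ hbij.mapsTo hbij.injOn hbij.surjOn fun i _ => ?_
  rw [← hf.int_mul ((x + i - 1) / n) ((x + i - 1) % n + 1), Int.cast_id, add_right_comm,
    Int.emod_add_ediv_mul, sub_add_cancel]

lemma prod_Icc_two_mul {M : Type*} [CommMonoid M] (f : ℤ → M) {n : ℤ} (hn : 0 ≤ n) :
    ∏ i ∈ Finset.Icc 1 (2 * n), f i =
      (∏ i ∈ Finset.Icc 1 n, f (2 * i - 1)) * ∏ i ∈ Finset.Icc 1 n, f (2 * i) := by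
  induction n, hn using Int.leInduction with
  | base => simp
  | succ n hn ih =>
    rw [prod_Icc_succ_right (by omega), prod_Icc_succ_right (by omega),
      show 2 * (n + 1) - 1 = 2 * n + 1 by ring, show 2 * (n + 1) = 2 * n + 1 + 1 by ring,
      prod_Icc_succ_right (by omega), prod_Icc_succ_right (by omega), ih, mul_assoc,
      mul_mul_mul_comm]

section ClassWeight

variable [CommRing R] {n C : ℤ} {Z : ℤ → ℤ → R} {e : R}

lemma prod_row_of_class (hn : 0 < n) (hodd : Odd n)
    (hZ : ∀ a b, Z a b = if n ∣ 2 * a + b - C then e else -1) (a : ℤ) :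
    ∏ b ∈ Finset.Icc 1 n, Z a b = e := by
  rw [← prod_ite_eq_neg_one (odd_card_Icc_one hn.le hodd)
    (Finset.mem_Icc.2 (classCol_mem_Icc (C := C) hn a)) e]
  refine Finset.prod_congr rfl fun b hb => ?_
  rw [Finset.mem_Icc] at hb
  rw [hZ]
  exact if_congr (dvd_iff_eq_classCol hb.1 hb.2) rfl rfl

lemma apply_corner_of_class (hn : 0 < n)
    (hZ : ∀ a b, Z a b = if n ∣ 2 * a + b - C then e else -1) (h1 : classCol n C 1 = 1)
    {a b : ℤ} (ha : a = 1 ∨ a = n + 1) (hb : b = 1 ∨ b = n + 1) : Z a b = e := by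
  have ha1 : classCol n C a = 1 := by
    rcases ha with rfl | rfl
    · exact h1
    · rw [classCol_add_self, h1]
  rw [hZ, if_pos]
  rw [dvd_iff_eq_classCol_or hn (by omega) (by omega)]
  omega

lemma prod_last_col_of_class (hn : 0 < n) (hodd : Odd n)
    (hZ : ∀ a b, Z a b = if n ∣ 2 * a + b - C then e else -1) (h1 : classCol n C 1 = 1) :
    ∏ a ∈ Finset.Icc 1 n, Z a (n + 1) = e := by
  have hmem : (1 : ℤ) ∈ Finset.Icc 1 n := Finset.left_mem_Icc.2 hn
  rw [← prod_ite_eq_neg_one (odd_card_Icc_one hn.le hodd) hmem e]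
  refine Finset.prod_congr rfl fun a ha => ?_
  have hcol := classCol_mem_Icc (C := C) hn a
  have hinj : classCol n C a = classCol n C 1 ↔ a = 1 :=
    (bijOn_classCol hodd).injOn.eq_iff (Finset.mem_Icc.1 ha) (Finset.mem_Icc.1 hmem)
  rw [Set.mem_Icc] at hcol
  rw [hZ]
  refine if_congr ?_ rfl rfl
  rw [dvd_iff_eq_classCol_or hn (by omega) le_rfl, ← hinj, h1]
  omega

lemma prod_gridSquare_mul_prod_gridSquare_of_class {X : ℤ → ℤ → R} (hn : 0 < n) (hodd : Odd n)
    (hX : ∀ a, (∏ b ∈ Finset.Icc 1 n, X a b) * e = 1)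
    (hZ : ∀ a b, Z a b = if n ∣ 2 * a + b - C then e else -1) (h1 : classCol n C 1 = 1) :
    (∏ x ∈ gridSquare n, X x.1 x.2) * ∏ x ∈ gridSquare (n + 1), Z x.1 x.2 = e ^ 3 := by
  have hn1 : (1 : ℤ) ≤ n + 1 := by omega
  have hcorner : Z (n + 1) (n + 1) = e := apply_corner_of_class hn hZ h1 (.inr rfl) (.inr rfl)
  simp only [gridSquare, Finset.prod_product, prod_Icc_succ_right hn1, Finset.prod_mul_distrib,
    prod_row_of_class hn hodd hZ, prod_last_col_of_class hn hodd hZ h1, hcorner]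
  have hone : (∏ a ∈ Finset.Icc 1 n, ∏ b ∈ Finset.Icc 1 n, X a b) *
      ∏ _a ∈ Finset.Icc 1 n, e = 1 := by
    rw [← Finset.prod_mul_distrib, Finset.prod_eq_one fun a _ => hX a]
  linear_combination e ^ 3 * hone

lemma cornerWeight_lower_of_class [IsDomain R] {X : ℤ → ℤ → R} {c c' : ℤ → ℤ → ℤ} (hn : 0 < n)
    (hodd : Odd n) (he : e ≠ -1) (hX : ∀ a, (∏ b ∈ Finset.Icc 1 n, X a b) * e = 1)
    (hZ : ∀ a b, Z a b = if n ∣ 2 * a + b - C then e else -1) (h1 : classCol n C 1 = 1)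
    (hc : IsCornerSum (n + 1) c) (hc' : IsCornerSum (n + 1) c')
    (hlower : ∀ x ∈ gridSquare n, c' x.1 x.2 = c x.1 x.2 - 1) :
    cornerWeight (n + 1) X Z c' = cornerWeight (n + 1) X Z c * e := by
  have hcorner {a b : ℤ} := apply_corner_of_class (a := a) (b := b) hn hZ h1
  have he0 : e ≠ 0 := right_ne_zero_of_mul_eq_one (hX 1)
  have he1 : 1 + e ≠ 0 := fun h => he (eq_neg_of_add_eq_zero_right h)
  have hratio := hc.cornerWeight_lower (by omega) hc'
    (by rwa [add_sub_cancel_right]) X Z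
  rw [add_sub_cancel_right, hcorner (.inl rfl) (.inl rfl), hcorner (.inl rfl) (.inr rfl),
    hcorner (.inr rfl) (.inl rfl), hcorner (.inr rfl) (.inr rfl),
    mul_assoc (cornerWeight (n + 1) X Z c),
    prod_gridSquare_mul_prod_gridSquare_of_class hn hodd hX hZ h1] at hratio
  refine mul_right_cancel₀ (mul_ne_zero (mul_ne_zero he0 he0) (mul_ne_zero he1 he1)) ?_
  linear_combination hratio

end ClassWeight

end Products

/-! ### Nonvanishing -/

section Nonvanishing

variable {R : Type*} [CommRing R] [IsDomain R] {y : ℤ → R} {j n C : ℤ} {e : R}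

lemma aeval_pentagramF_ne_zero_of_unique {k : ℤ} {c' : ℤ → ℤ → ℤ} (hy : ∀ i, y i ≠ 0)
    (hc' : IsCornerSum k c')
    (hones : ∀ x ∈ onesSet k c', latticeWeight y j (k + 1) x.1 x.2 ≠ -1)
    (huniq : ∀ c, IsCornerSum k c →
      (∀ x ∈ onesSet k c, latticeWeight y j (k + 1) x.1 x.2 ≠ -1) →
      ∀ x ∈ gridSquare (k - 1), c x.1 x.2 = c' x.1 x.2) :
    aeval y (pentagramF j k) ≠ 0 := by
  rw [aeval_pentagramF_eq_sum_cornerWeight (s := {c'})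
    (fun c hc => Finset.mem_singleton.1 hc ▸ hc')
    (Finset.coe_singleton c' ▸ Set.injOn_singleton _ _)
    (fun c hc hsurv => ⟨c', Finset.mem_singleton_self c', huniq c hc hsurv⟩),
    Finset.sum_singleton]
  exact cornerWeight_ne_zero (fun _ _ => hy _) (fun _ _ => hy _) hones

lemma aeval_pentagramF_ne_zero_of_class (hodd : Odd n) (hy : ∀ i, y i ≠ 0) (he : e ≠ -1)
    (hZ : ∀ a b, latticeWeight y j (n + 1) a b = if n ∣ 2 * a + b - C then e else -1) :
    aeval y (pentagramF j n) ≠ 0 := by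
  have hσ := bijOn_classCol (C := C) hodd
  have hmem {c : ℤ → ℤ → ℤ} {x : ℤ × ℤ} (hx : x ∈ onesSet n c) :
      latticeWeight y j (n + 1) x.1 x.2 ≠ -1 ↔ x.2 = classCol n C x.1 := by
    have hsq := mem_gridSquare.1 (Finset.mem_filter.1 hx).1
    rw [hZ, ite_ne_right_iff, and_iff_left he, dvd_iff_eq_classCol hsq.2.1 hsq.2.2]
  exact aeval_pentagramF_ne_zero_of_unique hy (isCornerSum_permSum hσ)
    (fun x hx => (hmem hx).2 (eq_of_mem_onesSet_permSum hx))
    fun c hc hones => eq_permSum_of_mem_onesSet hσ hc fun x hx => (hmem hx).1 (hones x hx)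

lemma bigSum_one_eq_sub_one {σ : ℤ → ℤ} (hσ1 : σ 1 = 1) {x : ℤ × ℤ} (hx : x ∈ gridSquare n) :
    bigSum σ n 1 x.1 x.2 = bigSum σ n (n + 1) x.1 x.2 - 1 := by
  have hsq := mem_gridSquare.1 hx
  have hrow : ¬n + 1 ≤ x.1 := by omega
  have hcol : ¬n + 1 ≤ x.2 := by omega
  rw [bigSum, bigSum, hσ1, if_pos hsq.1.1, if_neg hrow, if_neg hcol, if_pos hsq.2.1]
  ring

lemma aeval_pentagramF_add_one_ne_zero_of_two {c c' : ℤ → ℤ → ℤ} (hn : 0 < n) (hodd : Odd n)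
    (hy : ∀ i, y i ≠ 0) (he : e ≠ -1)
    (hX : ∀ a, (∏ b ∈ Finset.Icc 1 n, latticeWeight y j (n + 1) a b) * e = 1)
    (hZ : ∀ a b, latticeWeight y j (n + 1 + 1) a b = if n ∣ 2 * a + b - C then e else -1)
    (h1 : classCol n C 1 = 1) (hc : IsCornerSum (n + 1) c) (hc' : IsCornerSum (n + 1) c')
    (hlower : ∀ x ∈ gridSquare n, c' x.1 x.2 = c x.1 x.2 - 1)
    (hones : ∀ x ∈ onesSet (n + 1) c, latticeWeight y j (n + 1 + 1) x.1 x.2 ≠ -1)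
    (huniq : ∀ d, IsCornerSum (n + 1) d →
      (∀ x ∈ onesSet (n + 1) d, latticeWeight y j (n + 1 + 1) x.1 x.2 ≠ -1) →
      (∀ x ∈ gridSquare (n + 1 - 1), d x.1 x.2 = c' x.1 x.2) ∨
        ∀ x ∈ gridSquare (n + 1 - 1), d x.1 x.2 = c x.1 x.2) :
    aeval y (pentagramF j (n + 1)) ≠ 0 := by
  have hmem : ((1 : ℤ), (1 : ℤ)) ∈ gridSquare n := mem_gridSquare.2 (by omega)
  have hideal : cornerIdeal (n + 1) c ≠ cornerIdeal (n + 1) c' :=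
    hc.cornerIdeal_ne_of_lt (by rwa [add_sub_cancel_right])
      (by rw [hlower _ hmem]; exact sub_one_lt _)
  have hne : c' ≠ c := fun h => hideal (h ▸ rfl)
  rw [aeval_pentagramF_eq_sum_cornerWeight (s := {c', c}), Finset.sum_pair hne,
    cornerWeight_lower_of_class hn hodd he hX hZ h1 hc hc' hlower, ← mul_add_one]
  · exact mul_ne_zero (cornerWeight_ne_zero (fun _ _ => hy _) (fun _ _ => hy _) hones)
      fun h => he (eq_neg_of_add_eq_zero_left h)
  · simp only [Finset.mem_insert, Finset.mem_singleton, forall_eq_or_imp, forall_eq]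
    exact ⟨hc', hc⟩
  · rw [Finset.coe_pair, Set.injOn_pair]
    exact fun h => absurd h.symm hideal
  · simpa only [Finset.mem_insert, Finset.mem_singleton, exists_eq_or_imp, exists_eq_left]
      using huniq

lemma aeval_pentagramF_add_one_ne_zero_of_class (hn : 0 < n) (hodd : Odd n)
    (hy : ∀ i, y i ≠ 0) (he : e ≠ -1)
    (hX : ∀ a, (∏ b ∈ Finset.Icc 1 n, latticeWeight y j (n + 1) a b) * e = 1)
    (hZ : ∀ a b, latticeWeight y j (n + 1 + 1) a b = if n ∣ 2 * a + b - C then e else -1) :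
    aeval y (pentagramF j (n + 1)) ≠ 0 := by
  have hσ := bijOn_classCol (C := C) hodd
  have hσn : classCol n C (n + 1) = classCol n C 1 := classCol_add_self 1
  have hmem {c : ℤ → ℤ → ℤ} {x : ℤ × ℤ} (hx : x ∈ onesSet (n + 1) c) :
      latticeWeight y j (n + 1 + 1) x.1 x.2 ≠ -1 ↔
        x.2 = classCol n C x.1 ∨ classCol n C x.1 = 1 ∧ x.2 = n + 1 := by
    have hsq := mem_gridSquare.1 (Finset.mem_filter.1 hx).1
    rw [hZ, ite_ne_right_iff, and_iff_left he, dvd_iff_eq_classCol_or hn hsq.2.1 hsq.2.2]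
  have hbig {a₀ : ℤ} (hσa₀ : classCol n C a₀ = 1) :
      ∀ x ∈ onesSet (n + 1) (bigSum (classCol n C) n a₀),
        latticeWeight y j (n + 1 + 1) x.1 x.2 ≠ -1 :=
    fun x hx => (hmem hx).2 (eq_or_eq_of_mem_onesSet_bigSum hσa₀ hx)
  by_cases h1 : classCol n C 1 = 1
  · exact aeval_pentagramF_add_one_ne_zero_of_two hn hodd hy he hX hZ h1
      (isCornerSum_bigSum hn hσ hσn (by omega) le_rfl (hσn.trans h1))
      (isCornerSum_bigSum hn hσ hσn le_rfl (by omega) h1)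
      (fun x hx => bigSum_one_eq_sub_one h1 hx) (hbig (hσn.trans h1))
      fun d hd hones => eq_bigSum_or_eq_bigSum_of_apply_one_eq_one hn hσ hσn hd
        (fun x hx => (hmem hx).1 (hones x hx)) h1
  · obtain ⟨a₀, ⟨ha₀, ha₀n⟩, hσa₀⟩ := hσ.surjOn ⟨le_rfl, hn⟩
    exact aeval_pentagramF_ne_zero_of_unique hy
      (isCornerSum_bigSum hn hσ hσn ha₀ (by omega) hσa₀) (hbig hσa₀)
      fun c hc hones => eq_bigSum_of_apply_one_ne_one hn hσ hσn hc
        (fun x hx => (hmem hx).1 (hones x hx)) h1 ha₀ ha₀n hσa₀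

end Nonvanishing

/-! ### The pentagram-map weights -/

section PeriodicWeight

variable {R : Type*} [CommRing R] {y : ℤ → R} {n : ℤ}

lemma apply_ne_zero_of_prod_eq_one [Nontrivial R] (hn : 0 < n) (hper : Function.Periodic y n)
    (hprod : ∏ i ∈ Finset.Icc 1 n, y i = 1) (i : ℤ) : y i ≠ 0 := by
  have hdvd : y (i - 1 + 1) ∣ ∏ m ∈ Finset.Icc 1 n, y (i - 1 + m) :=
    Finset.dvd_prod_of_mem (fun m => y (i - 1 + m)) (Finset.left_mem_Icc.2 hn)
  rw [prod_Icc_add_of_periodic hper, hprod, sub_add_cancel] at hdvd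
  exact (isUnit_of_dvd_one hdvd).ne_zero

lemma apply_two_mul_eq_ite (hn : 0 < n) (hper : Function.Periodic y (2 * n))
    (hneg : ∀ i ∈ AP 2 (2 * n - 2) 2, y i = -1) (x : ℤ) :
    y (2 * x) = if n ∣ x then y 0 else -1 := by
  have hmod : y (2 * x) = y (2 * (x % n)) := by
    rw [← hper.int_mul (x / n) (2 * (x % n)), Int.cast_id, mul_left_comm, ← mul_add,
      Int.emod_add_ediv_mul]
  rw [hmod]
  split_ifs with hdvd
  · rw [Int.emod_eq_zero_of_dvd hdvd, mul_zero]
  · have := Int.emod_nonneg x hn.ne'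
    have := Int.emod_lt_of_pos x hn
    have : x % n ≠ 0 := mt Int.dvd_of_emod_eq_zero hdvd
    exact hneg _ ⟨by omega, by omega, by omega⟩

lemma latticeWeight_add_one_eq_ite {j k m : ℤ} {e : R}
    (hy : ∀ x, y (2 * x) = if n ∣ x then e else -1) (hm : j + k = 2 * m + 1) (a b : ℤ) :
    latticeWeight y j (k + 1) a b = if n ∣ 2 * a + b - (2 * k + 1 - m) then e else -1 := by
  rw [← hy, latticeWeight]
  congr 1
  linear_combination hm

lemma prod_apply_two_mul {e : R} (hn : 0 < n) (hodd : Odd n)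
    (hy : ∀ x, y (2 * x) = if n ∣ x then e else -1) :
    ∏ i ∈ Finset.Icc 1 n, y (2 * i) = e := by
  rw [← prod_ite_eq_neg_one (odd_card_Icc_one hn.le hodd) (Finset.right_mem_Icc.2 hn) e]
  refine Finset.prod_congr rfl fun i hi => ?_
  rw [Finset.mem_Icc] at hi
  rw [hy]
  refine if_congr ⟨fun h => ?_, fun h => h ▸ dvd_rfl⟩ rfl rfl
  exact hi.2.antisymm (Int.le_of_dvd hi.1 h)

lemma prod_latticeWeight_mul {j k m : ℤ} {e : R} (hn : 0 < n) (hodd : Odd n)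
    (hper : Function.Periodic y (2 * n)) (hprod : ∏ i ∈ Finset.Icc 1 (2 * n), y i = 1)
    (hy : ∀ x, y (2 * x) = if n ∣ x then e else -1) (hm : j + k = 2 * m + 1) (a : ℤ) :
    (∏ b ∈ Finset.Icc 1 n, latticeWeight y j k a b) * e = 1 := by
  have hodd_per : Function.Periodic (fun i => y (2 * i - 1)) n := fun i => by
    simpa only [mul_add, add_sub_right_comm] using hper (2 * i - 1)
  have hrow (b : ℤ) : latticeWeight y j k a b = y (2 * (2 * a + m - 2 * k + 1 + b) - 1) := by
    rw [latticeWeight]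
    congr 1
    linear_combination hm
  rw [Finset.prod_congr rfl fun b _ => hrow b,
    prod_Icc_add_of_periodic hodd_per (2 * a + m - 2 * k + 1)]
  rwa [prod_Icc_two_mul y hn.le, prod_apply_two_mul hn hodd hy] at hprod

end PeriodicWeight

theorem stmt8_general {R : Type*} [CommRing R] [IsDomain R] {n : ℤ} (hn : 0 < n) (hodd : Odd n)
    {y : ℤ → R} (hper : ∀ i, y (i + 2 * n) = y i) (hneg : ∀ i ∈ AP 2 (2 * n - 2) 2, y i = -1)
    (hprod : ∏ i ∈ Finset.Icc 1 (2 * n), y i = 1) (h0 : y 0 ≠ -1) {j k : ℤ} (hjk : Odd (j + k))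
    (hk : k = n ∨ k = n + 1) : aeval y (pentagramF j k) ≠ 0 := by
  have hnz : ∀ i, y i ≠ 0 := apply_ne_zero_of_prod_eq_one (by omega) hper hprod
  have heven := apply_two_mul_eq_ite hn hper hneg
  obtain ⟨m, hm⟩ := hjk
  have hclass := latticeWeight_add_one_eq_ite heven hm
  rcases hk with rfl | rfl
  · exact aeval_pentagramF_ne_zero_of_class hodd hnz h0 hclass
  · exact aeval_pentagramF_add_one_ne_zero_of_class hn hodd hnz h0
      (prod_latticeWeight_mul hn hodd hper hprod heven hm) hclass

theorem stmt8 (n : ℤ) (hn : 3 ≤ n) (hodd : Odd n) (y : ℤ → ℝ)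
    (hper : ∀ i : ℤ, y (i + 2 * n) = y i)
    (hneg : ∀ i ∈ AP 2 (2 * n - 2) 2, y i = -1)
    (hprod : ∏ i ∈ Finset.Icc (1 : ℤ) (2 * n), y i = 1)
    (h0 : y 0 ≠ -1) (hnz : ∀ i : ℤ, y i ≠ 0) :
    ∀ j k : ℤ, Odd (j + k) → (k = n ∨ k = n + 1) →
      MvPolynomial.aeval y (pentagramF j k) ≠ 0 :=
  fun _ _ => stmt8_general (by omega) hodd hper hneg hprod h0

end
end

section
/- Fix integers i and m with m ≥ 1, and let S = [2i−2(m−1), 2i+2(m−1)]_4. Then F_{j,k}|_S ≠ 0 for all integers j and k with k ∈ {m+1, m+2} and j+k odd. -/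
/-!
The idea is to find an order ideal `I₀` whose monomial in the variables outside `S` arises from no
other order ideal; the coefficient of that monomial in `F_{j,k}|_S` is then `±1`.

Call `3r + s + j` the index of `(r,s,t)`. Let `a` be the centre of `S` and `c = j - a`, and let `I₀`
consist of the elements of `P_k` with `t - |r + s + c| ≤ k - 2m - 3`. The left side is weakly
increasing along covers, so `I₀` is an order ideal. If `I` is an order ideal with the same monomial,
then:
* `I₀` contains all elements whose index is at distance at least `2m + 2` from `a`, so `I` contains
  them too, by counting the elements of each index. Each element of `I₀` lies below such an element,
  hence `I₀ ⊆ I`.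
* By counting again, all elements of `I \ I₀` have index in `S`. A minimal one would have all its
  lower covers in `I₀`. But if an element with index in `S` is outside `I₀`, then a congruence
  modulo `4` shows that its value of `t - |r + s + c|` exceeds the bound by at least `3`, while a
  cover changes this value by at most `2`; so none of its lower covers is in `I₀`. Such an element
  does have lower covers, because `m < k` keeps it off the bottom level `t = 1 - k`.
-/


open MvPolynomial
open scoped Classical

noncomputable section

namespace Pentagram

section LabelCount

variable {α σ : Type*} (f : α → σ) (S : Set σ)

/-- The exponent of the monomial of `I` in the variables outside `S`, where `p` carries the variable
of index `f p`. -/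
def labelCount (I : Finset α) : σ →₀ ℕ :=
  ∑ p ∈ I with f p ∉ S, Finsupp.single (f p) 1

lemma labelCount_apply_of_notMem {n : σ} (hn : n ∉ S) (I : Finset α) :
    labelCount f S I n = (I.filter (f · = n)).card := by
  rw [labelCount, Finsupp.finsetSum_apply, Finset.sum_filter, Finset.card_filter]
  refine Finset.sum_congr rfl fun p _ => ?_
  by_cases hp : f p = n
  · simp [hp, hn]
  · simp [hp]

lemma prod_ite_neg_one_X {R : Type*} [CommRing R] (I : Finset α) :
    ∏ p ∈ I, (if f p ∈ S then (-1 : MvPolynomial σ R) else X (f p)) =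
      monomial (labelCount f S I) ((-1) ^ (I.filter (f · ∈ S)).card) := by
  rw [Finset.prod_ite, Finset.prod_const, ← mul_one ((-1 : R) ^ _), ← C_mul_monomial,
    C_pow, C_neg, C_1, labelCount, monomial_sum_one]
  rfl

variable {f S}

lemma sum_prod_ite_neg_one_X_ne_zero {R : Type*} [CommRing R] [Nontrivial R]
    {𝓘 : Finset (Finset α)} {I₀ : Finset α} (hI₀ : I₀ ∈ 𝓘)
    (huniq : ∀ I ∈ 𝓘, labelCount f S I = labelCount f S I₀ → I = I₀) :
    ∑ I ∈ 𝓘, ∏ p ∈ I, (if f p ∈ S then (-1 : MvPolynomial σ R) else X (f p)) ≠ 0 := by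
  refine ne_zero_iff.mpr ⟨labelCount f S I₀, ?_⟩
  have hcoeff : coeff (labelCount f S I₀)
      (∑ I ∈ 𝓘, ∏ p ∈ I, (if f p ∈ S then (-1 : MvPolynomial σ R) else X (f p))) =
        (-1) ^ (I₀.filter (f · ∈ S)).card := by
    simp only [prod_ite_neg_one_X, coeff_sum, coeff_monomial]
    rw [Finset.sum_eq_single_of_mem I₀ hI₀ fun I hI hne => if_neg (mt (huniq I hI) hne),
      if_pos rfl]
  rw [hcoeff]
  exact (isUnit_one.neg.pow _).ne_zero

lemma substNeg_sum_prod_X {f : α → ℤ} (S : Set ℤ) (𝓘 : Finset (Finset α)) :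
    substNeg S (∑ I ∈ 𝓘, ∏ p ∈ I, X (f p)) =
      ∑ I ∈ 𝓘, ∏ p ∈ I, (if f p ∈ S then (-1 : MvPolynomial ℤ ℤ) else X (f p)) := by
  simp [substNeg]

lemma mem_of_labelCount_eq {I K : Finset α} (hcount : labelCount f S I = labelCount f S K) {p : α}
    (hpS : f p ∉ S) (hsub : ∀ q ∈ I, f q = f p → q ∈ K) (hp : p ∈ K) : p ∈ I := by
  have hss : I.filter (f · = f p) ⊆ K.filter (f · = f p) := fun q hq =>
    have ⟨hqI, hqp⟩ := Finset.mem_filter.mp hq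
    Finset.mem_filter.mpr ⟨hsub q hqI hqp, hqp⟩
  have hcard : (K.filter (f · = f p)).card ≤ (I.filter (f · = f p)).card := by
    rw [← labelCount_apply_of_notMem f S hpS, ← labelCount_apply_of_notMem f S hpS, hcount]
  have hpI : p ∈ I.filter (f · = f p) :=
    Finset.eq_of_subset_of_card_le hss hcard ▸ Finset.mem_filter.mpr ⟨hp, rfl⟩
  exact Finset.mem_of_mem_filter p hpI

/-- Here `r z x` means that `x` covers `z` in the ranked poset `P`. Counting labels forces the
elements with label in `N` into `I`; these generate `I₀`, and a minimal element of `I \ I₀` would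
contradict `hcover`. -/
lemma eq_of_labelCount_eq {β : Type*} [LinearOrder β] {P : Set α} {r : α → α → Prop}
    {rank : α → β} (hrank : ∀ z x, r z x → rank z < rank x) {N : Set σ} (hNS : Disjoint N S)
    {I I₀ : Finset α} (hIP : (I : Set α) ⊆ P)
    (hI : ∀ x y, y ∈ I → Relation.ReflTransGen r x y → x ∈ I)
    (hN : ∀ p ∈ P, f p ∈ N → p ∈ I₀)
    (hbelow : ∀ p ∈ I₀, ∃ q, Relation.ReflTransGen r p q ∧ q ∈ I₀ ∧ f q ∈ N)
    (hcover : ∀ x ∈ P, f x ∈ S → x ∉ I₀ → ∃ z, r z x ∧ z ∉ I₀)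
    (hcount : labelCount f S I = labelCount f S I₀) : I = I₀ := by
  have hsub : I₀ ⊆ I := by
    intro p hp
    obtain ⟨q, hpq, hq, hqN⟩ := hbelow p hp
    refine hI p q (mem_of_labelCount_eq hcount (hNS.notMem_of_mem_left hqN) ?_ hq) hpq
    exact fun q' hq' heq => hN q' (hIP hq') (heq ▸ hqN)
  refine (Finset.sdiff_eq_empty_iff_subset.mp ?_).antisymm hsub
  by_contra hne
  obtain ⟨x, hx, hxmin⟩ :=
    (I \ I₀).exists_min_image rank (Finset.nonempty_iff_ne_empty.mpr hne)
  obtain ⟨hxI, hxI₀⟩ := Finset.mem_sdiff.mp hx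
  have hxS : f x ∈ S := by
    by_contra hxS
    exact hxI₀ (mem_of_labelCount_eq hcount.symm hxS (fun q hq _ => hsub hq) hxI)
  obtain ⟨z, hzx, hz⟩ := hcover x (hIP hxI) hxS hxI₀
  have hzI : z ∈ I := hI z x hxI (.single hzx)
  exact (hrank z x hzx).not_ge (hxmin z (Finset.mem_sdiff.mpr ⟨hzI, hz⟩))

end LabelCount

/-- The covering relation within `P_k`, whose reflexive-transitive closure is `pentagramLe k`. -/
def CoversIn (k : ℤ) (x y : ℤ × ℤ × ℤ) : Prop :=
  x ∈ pentagramP k ∧ y ∈ pentagramP k ∧ pentagramCovers x y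

/-- The index of the variable attached to an element of `P_k` in `F_{j,k}`. -/
def index (j : ℤ) (p : ℤ × ℤ × ℤ) : ℤ := 3 * p.1 + p.2.1 + j

/-- The function on `P_k` whose sublevel sets are the order ideals used to isolate a monomial of
`F_{j,k}`. The parameter `c` is `j` minus the centre of the progression `S`. -/
def tilt (c : ℤ) (p : ℤ × ℤ × ℤ) : ℤ := p.2.2 - |p.1 + p.2.1 + c|

/-- The elements of `P_k` of tilt at most `T`, as a finite set. -/
def tiltIdeal (k c T : ℤ) : Finset (ℤ × ℤ × ℤ) := (pentagramPFinset k).filter (tilt c · ≤ T)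

variable {a c j k m T : ℤ} {p x y : ℤ × ℤ × ℤ}

lemma mem_pentagramPFinset : p ∈ pentagramPFinset k ↔ p ∈ pentagramP k := by
  simp only [pentagramPFinset, Finset.mem_filter, Finset.mem_product, Finset.mem_Icc,
    and_iff_right_iff_imp, pentagramP, pentagramQ, Set.mem_union, Set.mem_ofPred_eq, abs_eq_max_neg]
  omega

lemma mem_tiltIdeal : p ∈ tiltIdeal k c T ↔ p ∈ pentagramP k ∧ tilt c p ≤ T := by
  rw [tiltIdeal, Finset.mem_filter, mem_pentagramPFinset]

lemma tilt_le_of_covers (h : pentagramCovers x y) : tilt c x ≤ tilt c y := by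
  simp only [pentagramCovers, tilt, abs_eq_max_neg] at *
  omega

lemma tilt_le_add_two_of_covers (h : pentagramCovers x y) : tilt c y ≤ tilt c x + 2 := by
  simp only [pentagramCovers, tilt, abs_eq_max_neg] at *
  omega

lemma isPentagramOrderIdeal_tiltIdeal (k c T : ℤ) :
    IsPentagramOrderIdeal k (tiltIdeal k c T : Set (ℤ × ℤ × ℤ)) := by
  refine ⟨fun p hp => (mem_tiltIdeal.mp hp).1, fun x y hy hxy => ?_⟩
  induction hxy using Relation.ReflTransGen.head_induction_on with
  | refl => exact hy
  | head hcov _ ih =>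
    exact mem_tiltIdeal.mpr ⟨hcov.1, (tilt_le_of_covers hcov.2.2).trans (mem_tiltIdeal.mp ih).2⟩

lemma tilt_add_abs_index_le (hp : p ∈ pentagramP k) : tilt c p + |index c p| ≤ k - 1 := by
  simp only [pentagramP, pentagramQ, Set.mem_union, Set.mem_ofPred_eq, abs_eq_max_neg, tilt,
    index] at *
  omega

lemma snd_snd_lt_of_mem_pentagramP (hp : p ∈ pentagramP k) : p.2.2 < k := by
  simp only [pentagramP, pentagramQ, Set.mem_union, Set.mem_ofPred_eq, abs_eq_max_neg] at hp
  omega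

/-- Move away from `r + s + c = 0`, changing `s` on `Q_k` and `r` on `Q_{k+1}`. The step leaves
`P_k` only at an element that is maximal in its `(r,s)`-column, where the index is already large. -/
lemma exists_coversIn_tilt_le (hp : p ∈ pentagramP k) (hT : tilt c p ≤ T)
    (hindex : |index c p| < k - 1 - T) : ∃ q, CoversIn k p q ∧ tilt c q ≤ T := by
  obtain ⟨r, s, t⟩ := p
  obtain ⟨ε, hε, hsign⟩ : ∃ ε : ℤ, (ε = 1 ∨ ε = -1) ∧ |r + s + c| = ε * (r + s + c) := by
    rcases abs_choice (r + s + c) with h | h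
    · exact ⟨1, .inl rfl, by rw [h, one_mul]⟩
    · exact ⟨-1, .inr rfl, by rw [h, neg_one_mul]⟩
  have htilt {r' s' : ℤ} (h : r' + s' = r + s + ε) : tilt c (r', s', t + 1) ≤ T := by
    refine le_trans ?_ hT
    simp only [tilt, abs_eq_max_neg] at *
    rcases hε with rfl | rfl <;> omega
  have hε_abs : |ε| = 1 := by rcases hε with rfl | rfl <;> simp
  rcases id hp with hQ | hQ
  · refine ⟨(r, s + ε, t + 1), ⟨hp, .inr ?_, by simp [pentagramCovers, hε_abs]⟩, htilt (by ring)⟩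
    simp only [pentagramQ, Set.mem_ofPred_eq, abs_eq_max_neg] at *
    rcases hε with rfl | rfl <;> omega
  · refine ⟨(r + ε, s, t + 1), ⟨hp, .inl ?_, by simp [pentagramCovers, hε_abs]⟩, htilt (by ring)⟩
    simp only [pentagramQ, Set.mem_ofPred_eq, tilt, index, abs_eq_max_neg] at *
    rcases hε with rfl | rfl <;> omega

lemma exists_le_of_tilt_le (hp : p ∈ pentagramP k) (hT : tilt c p ≤ T) :
    ∃ q, pentagramLe k p q ∧ q ∈ tiltIdeal k c T ∧ k - 1 - T ≤ |index c q| := by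
  induction hn : (k - p.2.2).toNat using Nat.strong_induction_on generalizing p with | _ n ih
  rcases le_or_gt (k - 1 - T) |index c p| with hindex | hindex
  · exact ⟨p, .refl, mem_tiltIdeal.mpr ⟨hp, hT⟩, hindex⟩
  · obtain ⟨q, hpq, hq⟩ := exists_coversIn_tilt_le hp hT hindex
    have hrank : (k - q.2.2).toNat < (k - p.2.2).toNat := by
      rw [Int.toNat_lt_toNat (sub_pos.mpr (snd_snd_lt_of_mem_pentagramP hp)), hpq.2.2.1]
      exact sub_lt_sub_left (lt_add_one _) k
    obtain ⟨q', hqq', hq'⟩ := ih _ (hn ▸ hrank) hpq.2.1 hq rfl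
    exact ⟨q', .head hpq hqq', hq'⟩

lemma exists_coversIn_of_lt (hx : x ∈ pentagramP k) (ht : 1 - k < x.2.2) :
    ∃ z, CoversIn k z x := by
  obtain ⟨r, s, t⟩ := x
  rcases id hx with hQ | hQ
  · refine ⟨(r - 1, s, t - 1), .inr ?_, hx, by simp [pentagramCovers]⟩
    simp only [pentagramQ, Set.mem_ofPred_eq, abs_eq_max_neg] at *
    omega
  · rcases le_or_gt s 0 with hs | hs
    · refine ⟨(r, s + 1, t - 1), .inl ?_, hx, by simp [pentagramCovers]⟩
      simp only [pentagramQ, Set.mem_ofPred_eq, abs_eq_max_neg] at *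
      omega
    · refine ⟨(r, s - 1, t - 1), .inl ?_, hx, by simp [pentagramCovers]⟩
      simp only [pentagramQ, Set.mem_ofPred_eq, abs_eq_max_neg] at *
      omega

lemma le_tilt_of_index_mem_AP (hp : p ∈ pentagramP k)
    (hS : index j p ∈ AP (a - 2 * (m - 1)) (a + 2 * (m - 1)) 4)
    (hT : k - 2 * m - 3 < tilt (j - a) p) : k - 2 * m ≤ tilt (j - a) p := by
  obtain ⟨-, -, hdvd⟩ := hS
  have hmod_left (hQ : p ∈ pentagramQ k) : 4 ∣ tilt (j - a) p - (k - 2 * m) := by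
    simp only [pentagramQ, Set.mem_ofPred_eq, abs_eq_max_neg, tilt, index] at *
    omega
  have hmod_right (hQ : p ∈ pentagramQ (k + 1)) : 4 ∣ tilt (j - a) p - (k + 1 - 2 * m) := by
    simp only [pentagramQ, Set.mem_ofPred_eq, abs_eq_max_neg, tilt, index] at *
    omega
  rcases hp with hQ | hQ
  · have := hmod_left hQ
    omega
  · have := hmod_right hQ
    omega

lemma exists_coversIn_lt_tilt (hmk : m < k) (hx : x ∈ pentagramP k)
    (hS : index j x ∈ AP (a - 2 * (m - 1)) (a + 2 * (m - 1)) 4)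
    (hT : k - 2 * m - 3 < tilt (j - a) x) :
    ∃ z, CoversIn k z x ∧ k - 2 * m - 3 < tilt (j - a) z := by
  have hgap : k - 2 * m ≤ tilt (j - a) x := le_tilt_of_index_mem_AP hx hS hT
  have htilt : tilt (j - a) x ≤ x.2.2 := sub_le_self _ (abs_nonneg _)
  obtain ⟨z, hzx⟩ := exists_coversIn_of_lt hx (by omega)
  have hdrop : tilt (j - a) x ≤ tilt (j - a) z + 2 := tilt_le_add_two_of_covers hzx.2.2
  exact ⟨z, hzx, by omega⟩

lemma eq_tiltIdeal_of_labelCount_eq (hmk : m < k) {I : Finset (ℤ × ℤ × ℤ)}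
    (hI : IsPentagramOrderIdeal k (I : Set (ℤ × ℤ × ℤ)))
    (hcount : labelCount (index j) (AP (a - 2 * (m - 1)) (a + 2 * (m - 1)) 4) I =
      labelCount (index j) (AP (a - 2 * (m - 1)) (a + 2 * (m - 1)) 4)
        (tiltIdeal k (j - a) (k - 2 * m - 3))) :
    I = tiltIdeal k (j - a) (k - 2 * m - 3) := by
  have hindex (p : ℤ × ℤ × ℤ) : index (j - a) p = index j p - a := by
    simp only [index]
    ring
  refine eq_of_labelCount_eq (r := CoversIn k) (rank := fun p => p.2.2)
    (N := {n | 2 * m + 2 ≤ |n - a|}) ?_ ?_ hI.1 hI.2 ?_ ?_ ?_ hcount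
  · rintro z x ⟨-, -, hzx, -⟩
    omega
  · refine Set.disjoint_left.mpr ?_
    rintro n hn ⟨hlo, hhi, -⟩
    have hclose : |n - a| ≤ 2 * (m - 1) := abs_le.mpr ⟨by omega, by omega⟩
    have hfar : 2 * m + 2 ≤ |n - a| := hn
    omega
  · intro p hp hfar
    have hsum := tilt_add_abs_index_le (c := j - a) hp
    rw [hindex] at hsum
    have hfar : 2 * m + 2 ≤ |index j p - a| := hfar
    exact mem_tiltIdeal.mpr ⟨hp, by omega⟩
  · intro p hp
    obtain ⟨q, hpq, hq, hfar⟩ :=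
      exists_le_of_tilt_le (mem_tiltIdeal.mp hp).1 (mem_tiltIdeal.mp hp).2
    rw [hindex] at hfar
    refine ⟨q, hpq, hq, ?_⟩
    change 2 * m + 2 ≤ |index j q - a|
    omega
  · intro x hx hxS hxI₀
    have hT : k - 2 * m - 3 < tilt (j - a) x :=
      not_le.mp fun h => hxI₀ (mem_tiltIdeal.mpr ⟨hx, h⟩)
    obtain ⟨z, hzx, hz⟩ := exists_coversIn_lt_tilt hmk hx hxS hT
    exact ⟨z, hzx, fun h => hz.not_ge (mem_tiltIdeal.mp h).2⟩

end Pentagram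

open Pentagram in
theorem stmt10_general (a : ℤ) {j k m : ℤ} (hmk : m < k) :
    substNeg (AP (a - 2 * (m - 1)) (a + 2 * (m - 1)) 4) (pentagramF j k) ≠ 0 := by
  change substNeg _ (∑ I ∈ (pentagramPFinset k).powerset.filter
    (fun I : Finset (ℤ × ℤ × ℤ) => IsPentagramOrderIdeal k (I : Set (ℤ × ℤ × ℤ))),
      ∏ p ∈ I, X (index j p)) ≠ 0
  rw [substNeg_sum_prod_X]
  refine sum_prod_ite_neg_one_X_ne_zero (I₀ := tiltIdeal k (j - a) (k - 2 * m - 3)) ?_ ?_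
  · exact Finset.mem_filter.mpr ⟨Finset.mem_powerset.mpr (Finset.filter_subset _ _),
      isPentagramOrderIdeal_tiltIdeal _ _ _⟩
  · exact fun I hI hcount => eq_tiltIdeal_of_labelCount_eq hmk (Finset.mem_filter.mp hI).2 hcount

theorem stmt10 (i m : ℤ) (hm : 1 ≤ m) :
    ∀ j k : ℤ, (k = m + 1 ∨ k = m + 2) → Odd (j + k) →
      substNeg (AP (2 * i - 2 * (m - 1)) (2 * i + 2 * (m - 1)) 4) (pentagramF j k) ≠ 0 := by
  rintro j k hk -
  exact stmt10_general (2 * i) (by omega)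

end
end
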